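/- Let d ≥ 1 and for each n let Λ_n be the lattice box [−n^{1/d}, n^{1/d}]^d ∩ Z^d with N_n vertices, and let Q(Λ_n) be the matrix Q(Λ_n)_{ij} = 1(‖i−j‖_1 = 1) for i,j ∈ Λ_n. Let β_1, β_2 > 0 and let X ~ P_{β_1,Q(Λ_n)} and Y ~ P_{β_2,Q(Λ_n)} be independent Ising random vectors. Assume (high-temperature hypotheses): (i) for each of X and Y all pairwise covariances are nonnegative and there is a constant c > 0 with Cov(X_i,X_j) ≤ e^{−c‖i−j‖_1} and Cov(Y_i,Y_j) ≤ e^{−c‖i−j‖_1} for all i ≠ j; (ii) the sample means X̄_{N_n} and Ȳ_{N_n} converge to 0 in probability; (iii) (1/N_n) Σ_{i≠j} Cov(X_i,X_j) Cov(Y_i,Y_j) converges to a limit κ. Then κ > 0, √(N_n) · T_{N_n} converges in distribution to N(0, v²) with v² = 1 + κ > 1, and √(N_n) · ρ_{N_n} converges in distribution to the same limit N(0, v²). -/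

import Mathlib

open MeasureTheory ProbabilityTheory Filter Topology Matrix

noncomputable section

/-- The `±1` configuration associated to a boolean configuration. -/
def pmVec {ι : Type*} (s : ι → Bool) : ι → ℝ := fun i => if s i then 1 else -1

/-- Unnormalized Ising weight `exp((β/2) zᵀ Q z)`. -/
def isingWeight {ι : Type*} [Fintype ι] (β : ℝ) (Q : Matrix ι ι ℝ) (z : ι → ℝ) : ℝ :=
  Real.exp (β / 2 * (z ⬝ᵥ Q.mulVec z))

/-- Ising partition function `Z(β,Q)`. -/
def isingZ (ι : Type*) [Fintype ι] [DecidableEq ι] (β : ℝ) (Q : Matrix ι ι ℝ) : ℝ :=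
  ∑ s : ι → Bool, isingWeight β Q (pmVec s)

/-- The Ising probability measure `P_{β,Q}` on `{±1}^ι ⊆ ℝ^ι`:
`P(z) = exp((β/2) zᵀQz) / Z(β,Q)`. -/
def isingMeasure (ι : Type*) [Fintype ι] [DecidableEq ι] (β : ℝ) (Q : Matrix ι ι ℝ) :
    Measure (ι → ℝ) :=
  ∑ s : ι → Bool,
    ENNReal.ofReal (isingWeight β Q (pmVec s) / isingZ ι β Q) • Measure.dirac (pmVec s)

/-- Sample mean `X̄ = (1/n) Σ_i X_i`. -/
def sampleMean {ι : Type*} [Fintype ι] (x : ι → ℝ) : ℝ := (∑ i, x i) / (Fintype.card ι : ℝ)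

/-- Sample covariance `T_n = (1/n) Σ_i (X_i - X̄)(Y_i - Ȳ)`. -/
def sampleCov {ι : Type*} [Fintype ι] (x y : ι → ℝ) : ℝ :=
  (∑ i, (x i - sampleMean x) * (y i - sampleMean y)) / (Fintype.card ι : ℝ)

/-- Convergence in distribution: weak convergence of the laws, tested against
bounded continuous functions. -/
def TendstoInDistribution (μ : ℕ → Measure ℝ) (ν : Measure ℝ) : Prop :=
  ∀ f : BoundedContinuousFunction ℝ ℝ,
    Tendsto (fun n => ∫ x, f x ∂(μ n)) atTop (𝓝 (∫ x, f x ∂ν))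

/-- The Curie–Weiss interaction matrix `Q^{CW} = (1/n)(11ᵀ - I)`. -/
def QCW (n : ℕ) : Matrix (Fin n) (Fin n) ℝ := fun i j => if i = j then 0 else (n : ℝ)⁻¹

/-- `m(β)`: equal to `0` for `β ≤ 1`, and to the unique positive root of
`m = tanh(β m)` for `β > 1`. -/
def isingMag (β : ℝ) : ℝ := sSup {m : ℝ | 0 ≤ m ∧ m = Real.tanh (β * m)}


/-- Sample correlation `ρₙ`. -/
def sampleCorr {ι : Type*} [Fintype ι] (x y : ι → ℝ) : ℝ :=
  (∑ i, (x i - sampleMean x) * (y i - sampleMean y)) /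
    (Real.sqrt (∑ i, (x i - sampleMean x) ^ 2) * Real.sqrt (∑ i, (y i - sampleMean y) ^ 2))

/-- Convergence in probability to a constant, for a sequence of laws on `ℝ`. -/
def TendstoInProbability (μ : ℕ → Measure ℝ) (c : ℝ) : Prop :=
  ∀ ε : ℝ, 0 < ε → Tendsto (fun n => μ n {x | ε ≤ |x - c|}) atTop (𝓝 0)

/-- Covariance of the coordinates `z i` and `z j` under a law `μ` on `ι → ℝ`. -/
def coordCov {ι : Type*} (μ : Measure (ι → ℝ)) (i j : ι) : ℝ :=
  (∫ z, z i * z j ∂μ) - (∫ z, z i ∂μ) * (∫ z, z j ∂μ)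

/-- Radius `⌊n^{1/d}⌋` of the lattice box. -/
def latticeRadius (d n : ℕ) : ℤ := ⌊(n : ℝ) ^ ((1 : ℝ) / d)⌋

/-- The lattice box `Λ_{n,d} = [-n^{1/d}, n^{1/d}]^d ∩ ℤ^d`. -/
def latticeBox (d n : ℕ) : Finset (Fin d → ℤ) :=
  Fintype.piFinset fun _ => Finset.Icc (-(latticeRadius d n)) (latticeRadius d n)

/-- Vertices of the lattice box. -/
abbrev LatticeVertex (d n : ℕ) := {i : Fin d → ℤ // i ∈ latticeBox d n}

/-- `L¹` distance on `ℤ^d`. -/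
def l1dist {d : ℕ} (i j : Fin d → ℤ) : ℤ := ∑ k, |i k - j k|

/-- Number of vertices `N_n` of the lattice box. -/
def latticeN (d n : ℕ) : ℕ := (latticeBox d n).card

/-- Nearest-neighbour interaction matrix `Q(Λ_{n,d})_{ij} = 1(‖i-j‖₁ = 1)`. -/
def latticeQ (d n : ℕ) : Matrix (LatticeVertex d n) (LatticeVertex d n) ℝ :=
  fun i j => if l1dist i.1 j.1 = 1 then 1 else 0

/-- The Ising measure on the lattice box `Λ_{n,d}`. -/
def latticeIsing (d n : ℕ) (β : ℝ) : Measure (LatticeVertex d n → ℝ) :=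
  isingMeasure (LatticeVertex d n) β (latticeQ d n)


section Generic

set_option linter.unusedSectionVars false

variable {Ω : Type*} [Fintype Ω]

/-- finite real expectation -/
def exR (p : Ω → ℝ) (f : Ω → ℝ) : ℝ := ∑ s, p s * f s

/-- finite complex expectation -/
def exC (p : Ω → ℝ) (f : Ω → ℂ) : ℂ := ∑ s, (p s : ℂ) * f s

/-- covariance -/
def covR (p : Ω → ℝ) (f g : Ω → ℝ) : ℝ := exR p (fun s => f s * g s) - exR p f * exR p g

lemma exR_add (p f g : Ω → ℝ) : exR p (fun s => f s + g s) = exR p f + exR p g := by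
  simp [exR, mul_add, Finset.sum_add_distrib]

lemma exR_sub (p f g : Ω → ℝ) : exR p (fun s => f s - g s) = exR p f - exR p g := by
  simp [exR, mul_sub, Finset.sum_sub_distrib]

lemma exR_mul (p f : Ω → ℝ) (a : ℝ) : exR p (fun s => a * f s) = a * exR p f := by
  simp only [exR, Finset.mul_sum]
  exact Finset.sum_congr rfl fun s _ => by ring

lemma exR_sum {ι : Type*} (A : Finset ι) (p : Ω → ℝ) (f : ι → Ω → ℝ) :
    exR p (fun s => ∑ i ∈ A, f i s) = ∑ i ∈ A, exR p (f i) := by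
  simp only [exR, Finset.mul_sum]
  exact Finset.sum_comm

lemma exR_mono {p f g : Ω → ℝ} (hp : ∀ s, 0 ≤ p s) (h : ∀ s, f s ≤ g s) : exR p f ≤ exR p g :=
  Finset.sum_le_sum fun s _ => mul_le_mul_of_nonneg_left (h s) (hp s)

lemma exR_const {p : Ω → ℝ} (h1 : ∑ s, p s = 1) (a : ℝ) : exR p (fun _ => a) = a := by
  simp [exR, ← Finset.sum_mul, h1]

lemma covR_sum {ι : Type*} (A B : Finset ι) (p : Ω → ℝ) (f g : ι → Ω → ℝ) :
    covR p (fun s => ∑ i ∈ A, f i s) (fun s => ∑ i ∈ B, g i s)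
      = ∑ i ∈ A, ∑ j ∈ B, covR p (f i) (g j) := by
  unfold covR
  simp only [Finset.sum_sub_distrib]
  rw [exR_sum, exR_sum, Finset.sum_mul_sum]
  congr 1
  rw [show (fun s => (∑ i ∈ A, f i s) * ∑ i ∈ B, g i s)
    = fun s => ∑ i ∈ A, ∑ j ∈ B, f i s * g j s from funext fun s => Finset.sum_mul_sum _ _ _ _]
  rw [exR_sum]
  exact Finset.sum_congr rfl fun i _ => by rw [exR_sum]

lemma covR_mul_mul (p f g : Ω → ℝ) (a b : ℝ) :
    covR p (fun s => a * f s) (fun s => b * g s) = a * b * covR p f g := by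
  unfold covR
  rw [exR_mul, exR_mul, show (fun s => a * f s * (b * g s)) = fun s => (a * b) * (f s * g s) from
    funext fun s => by ring, exR_mul]
  ring

lemma norm_exC_le {p : Ω → ℝ} (hp : ∀ s, 0 ≤ p s) (f : Ω → ℂ) (g : Ω → ℝ)
    (h : ∀ s, ‖f s‖ ≤ g s) : ‖exC p f‖ ≤ exR p g := by
  refine (norm_sum_le _ _).trans (Finset.sum_le_sum fun s _ => ?_)
  rw [norm_mul, Complex.norm_real, Real.norm_of_nonneg (hp s)]
  exact mul_le_mul_of_nonneg_left (h s) (hp s)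

lemma exC_sub (p : Ω → ℝ) (f g : Ω → ℂ) : exC p (fun s => f s - g s) = exC p f - exC p g := by
  simp [exC, mul_sub, Finset.sum_sub_distrib]

lemma exC_ofReal (p f : Ω → ℝ) : exC p (fun s => (f s : ℂ)) = (exR p f : ℂ) := by
  simp [exC, exR]

lemma exC_re (p : Ω → ℝ) (f : Ω → ℂ) : (exC p f).re = exR p (fun s => (f s).re) := by
  simp [exC, exR]

lemma exC_im (p : Ω → ℝ) (f : Ω → ℂ) : (exC p f).im = exR p (fun s => (f s).im) := by
  simp [exC, exR]

variable [DistribLattice Ω]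

/-- FKG measure -/
structure IsFKG (p : Ω → ℝ) : Prop where
  nonneg : ∀ s, 0 ≤ p s
  sum_one : ∑ s, p s = 1
  lattice : ∀ a b, p a * p b ≤ p (a ⊓ b) * p (a ⊔ b)

lemma IsFKG.cov_nonneg {p : Ω → ℝ} (hp : IsFKG p) {f g : Ω → ℝ} (hf : Monotone f)
    (hg : Monotone g) : 0 ≤ covR p f g := by
  set a := ∑ s, |f s|
  set b := ∑ s, |g s|
  have ha : ∀ s, 0 ≤ f s + a := fun s => by
    have := Finset.single_le_sum (f := fun s => |f s|) (fun i _ => abs_nonneg _) (Finset.mem_univ s)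
    have h2 := neg_abs_le (f s)
    linarith
  have hb : ∀ s, 0 ≤ g s + b := fun s => by
    have := Finset.single_le_sum (f := fun s => |g s|) (fun i _ => abs_nonneg _) (Finset.mem_univ s)
    have h2 := neg_abs_le (g s)
    linarith
  have := fkg (μ := p) (f := fun s => f s + a) (g := fun s => g s + b) hp.nonneg ha hb
    (fun x y h => by simpa using hf h) (fun x y h => by simpa using hg h) hp.lattice
  rw [hp.sum_one, one_mul] at this
  have e1 : ∑ s, p s * (f s + a) = exR p f + a := by
    simp [exR, mul_add, Finset.sum_add_distrib, ← Finset.sum_mul, hp.sum_one]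
  have e2 : ∑ s, p s * (g s + b) = exR p g + b := by
    simp [exR, mul_add, Finset.sum_add_distrib, ← Finset.sum_mul, hp.sum_one]
  have e3 : ∑ s, p s * ((f s + a) * (g s + b)) =
      exR p (fun s => f s * g s) + b * exR p f + a * exR p g + a * b := by
    have h4 := exR_const hp.sum_one (a * b)
    rw [← exR_mul, ← exR_mul, ← h4, ← exR_add, ← exR_add, ← exR_add]
    unfold exR
    exact Finset.sum_congr rfl fun s _ => by ring
  rw [e1, e2, e3] at this
  unfold covR
  nlinarith

/-- `F` dominates the increments of `f` along the order. -/
def Dom (f F : Ω → ℝ) : Prop := ∀ s s', s ≤ s' → |f s' - f s| ≤ F s' - F s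

lemma covR_bilin (p f g F G : Ω → ℝ) :
    covR p (fun s => F s - f s) (fun s => G s + g s) +
      covR p (fun s => F s + f s) (fun s => G s - g s) = 2 * (covR p F G - covR p f g) := by
  unfold covR
  rw [exR_add, exR_add, exR_sub, exR_sub]
  have : exR p (fun s => (F s - f s) * (G s + g s)) + exR p (fun s => (F s + f s) * (G s - g s))
      = 2 * exR p (fun s => F s * G s) - 2 * exR p (fun s => f s * g s) := by
    rw [← exR_mul, ← exR_mul, ← exR_add, ← exR_sub]
    congr 1
    ext s
    ring
  linarith

lemma IsFKG.cov_le {p : Ω → ℝ} (hp : IsFKG p) {f g F G : Ω → ℝ} (hf : Dom f F)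
    (hg : Dom g G) : covR p f g ≤ covR p F G := by
  have h1 : 0 ≤ covR p (fun s => F s - f s) (fun s => G s + g s) :=
    hp.cov_nonneg (fun s s' h => by have := abs_le.1 (hf s s' h); linarith [this.2])
      (fun s s' h => by have := abs_le.1 (hg s s' h); linarith [this.1])
  have h2 : 0 ≤ covR p (fun s => F s + f s) (fun s => G s - g s) :=
    hp.cov_nonneg (fun s s' h => by have := abs_le.1 (hf s s' h); linarith [this.1])
      (fun s s' h => by have := abs_le.1 (hg s s' h); linarith [this.2])
  have := covR_bilin p f g F G
  linarith

lemma IsFKG.abs_cov_le {p : Ω → ℝ} (hp : IsFKG p) {f g F G : Ω → ℝ} (hf : Dom f F)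
    (hg : Dom g G) : |covR p f g| ≤ covR p F G := by
  rw [abs_le]
  refine ⟨?_, hp.cov_le hf hg⟩
  have hn : Dom (fun s => -1 * f s) F := fun s s' h => by
    have := hf s s' h
    rw [← abs_neg] at this
    convert this using 2
    ring
  have h1 := hp.cov_le hn hg
  have h2 := covR_mul_mul p f g (-1) 1
  simp only [one_mul] at h2
  linarith

/-- complex version of domination -/
def DomC (f : Ω → ℂ) (F : Ω → ℝ) : Prop := ∀ s s', s ≤ s' → ‖f s' - f s‖ ≤ F s' - F s

lemma IsFKG.norm_cov_le {p : Ω → ℝ} (hp : IsFKG p) {f g : Ω → ℂ} {F G : Ω → ℝ} (hf : DomC f F)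
    (hg : DomC g G) :
    ‖exC p (fun s => f s * g s) - exC p f * exC p g‖ ≤ 4 * covR p F G := by
  have fr : Dom (fun s => (f s).re) F := fun s s' h =>
    le_trans (by rw [← Complex.sub_re]; exact Complex.abs_re_le_norm _) (hf s s' h)
  have fi : Dom (fun s => (f s).im) F := fun s s' h =>
    le_trans (by rw [← Complex.sub_im]; exact Complex.abs_im_le_norm _) (hf s s' h)
  have gr : Dom (fun s => (g s).re) G := fun s s' h =>
    le_trans (by rw [← Complex.sub_re]; exact Complex.abs_re_le_norm _) (hg s s' h)
  have gi : Dom (fun s => (g s).im) G := fun s s' h =>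
    le_trans (by rw [← Complex.sub_im]; exact Complex.abs_im_le_norm _) (hg s s' h)
  have h1 := abs_le.1 (hp.abs_cov_le fr gr)
  have h2 := abs_le.1 (hp.abs_cov_le fr gi)
  have h3 := abs_le.1 (hp.abs_cov_le fi gr)
  have h4 := abs_le.1 (hp.abs_cov_le fi gi)
  refine (Complex.norm_le_abs_re_add_abs_im _).trans ?_
  simp only [Complex.sub_re, Complex.sub_im, Complex.mul_re, Complex.mul_im, exC_re, exC_im,
    exR_sub, exR_add]
  unfold covR at *
  have a1 : ∀ x : ℝ, ∀ C, x ≤ C → -C ≤ x → |x| ≤ C := fun x C h h' => abs_le.2 ⟨h', h⟩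
  have := a1 (exR p (fun s => (f s).re * (g s).re) - exR p (fun s => (f s).im * (g s).im)
    - (exR p (fun s => (f s).re) * exR p (fun s => (g s).re)
      - exR p (fun s => (f s).im) * exR p (fun s => (g s).im)))
    (2 * (exR p (fun s => F s * G s) - exR p F * exR p G)) (by linarith) (by linarith)
  have := a1 (exR p (fun s => (f s).re * (g s).im) + exR p (fun s => (f s).im * (g s).re)
    - (exR p (fun s => (f s).re) * exR p (fun s => (g s).im)
      + exR p (fun s => (f s).im) * exR p (fun s => (g s).re)))
    (2 * (exR p (fun s => F s * G s) - exR p F * exR p G)) (by linarith) (by linarith)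
  linarith

/-- Newman's factorization bound. -/
lemma IsFKG.prod_bound {p : Ω → ℝ} (hp : IsFKG p) {B : Type*} [DecidableEq B]
    (u V : B → Ω → ℝ) (hu : ∀ b, Dom (u b) (V b)) (A : Finset B) :
    ‖exC p (fun s => ∏ b ∈ A, Complex.exp (Complex.I * (u b s : ℂ)))
        - ∏ b ∈ A, exC p (fun s => Complex.exp (Complex.I * (u b s : ℂ)))‖
      ≤ 4 * ∑ b ∈ A, ∑ b' ∈ A, if b ≠ b' then covR p (V b) (V b') else 0 := by
  have hV : ∀ b, Monotone (V b) := fun b s s' h => by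
    have := (abs_nonneg _).trans (hu b s s' h)
    linarith
  have hlip : ∀ x y : ℝ, ‖Complex.exp (Complex.I * (x : ℂ)) - Complex.exp (Complex.I * (y : ℂ))‖
      ≤ |x - y| := fun x y => by
    have : Complex.exp (Complex.I * (x : ℂ)) - Complex.exp (Complex.I * (y : ℂ))
      = Complex.exp (Complex.I * (y : ℂ)) * (Complex.exp (Complex.I * ((x - y : ℝ) : ℂ)) - 1) := by
      rw [mul_sub, ← Complex.exp_add]
      congr 2
      · push_cast; ring
      · ring
    rw [this, norm_mul, mul_comm Complex.I (y : ℂ), Complex.norm_exp_ofReal_mul_I, one_mul]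
    exact Real.norm_exp_I_mul_ofReal_sub_one_le
  have h1 : ∀ x : ℝ, ‖Complex.exp (Complex.I * (x : ℂ))‖ = 1 := fun x => by
    rw [mul_comm, Complex.norm_exp_ofReal_mul_I]
  induction A using Finset.induction_on with
  | empty =>
    have : exC p (fun _ => (1 : ℂ)) = 1 := by
      simp only [exC, mul_one]
      exact_mod_cast hp.sum_one
    simp [this]
  | insert c A hc ih =>
    simp only [Finset.prod_insert hc]
    have hF : DomC (fun s => ∏ b ∈ A, Complex.exp (Complex.I * (u b s : ℂ)))
        (fun s => ∑ b ∈ A, V b s) := fun s s' h => by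
      simp only [← Complex.exp_sum, ← Finset.mul_sum, ← Complex.ofReal_sum]
      refine (hlip _ _).trans ?_
      rw [← Finset.sum_sub_distrib, ← Finset.sum_sub_distrib]
      exact (Finset.abs_sum_le_sum_abs _ _).trans (Finset.sum_le_sum fun b _ => hu b s s' h)
    have hG : DomC (fun s => Complex.exp (Complex.I * (u c s : ℂ))) (V c) := fun s s' h =>
      (hlip _ _).trans (hu c s s' h)
    have k1 := hp.norm_cov_le hG hF
    have hs := covR_sum {c} A p V V
    simp only [Finset.sum_singleton] at hs
    change covR p (V c) _ = _ at hs
    rw [hs] at k1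
    have hn : ‖exC p (fun s => Complex.exp (Complex.I * (u c s : ℂ)))‖ ≤ 1 := by
      have := norm_exC_le hp.nonneg (fun s => Complex.exp (Complex.I * (u c s : ℂ))) (fun _ => 1)
        (fun s => (h1 _).le)
      rwa [exR_const hp.sum_one] at this
    have k2 : ∑ b ∈ insert c A, ∑ b' ∈ insert c A, (if b ≠ b' then covR p (V b) (V b') else 0)
        ≥ ∑ b ∈ A, covR p (V c) (V b) +
        ∑ b ∈ A, ∑ b' ∈ A, (if b ≠ b' then covR p (V b) (V b') else 0) := by
      rw [Finset.sum_insert hc, Finset.sum_insert hc]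
      simp only [ne_eq, not_true_eq_false, if_false, zero_add]
      refine add_le_add (le_of_eq ?_) (Finset.sum_le_sum fun b hb => ?_)
      · refine Finset.sum_congr rfl fun b hb => ?_
        rw [if_pos]
        rintro rfl
        exact hc hb
      · rw [Finset.sum_insert hc]
        have : 0 ≤ (if ¬ b = c then covR p (V b) (V c) else 0) := by
          split_ifs
          · rfl
          · exact hp.cov_nonneg (hV _) (hV _)
        linarith
    set P := exC p (fun s => Complex.exp (Complex.I * (u c s : ℂ)))
    set R := exC p (fun s => ∏ b ∈ A, Complex.exp (Complex.I * (u b s : ℂ)))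
    set R' := ∏ b ∈ A, exC p (fun s => Complex.exp (Complex.I * (u b s : ℂ)))
    have k3 : ‖P * R - P * R'‖ ≤ ‖R - R'‖ := by
      rw [← mul_sub, norm_mul]
      exact mul_le_of_le_one_left (norm_nonneg _) hn
    have k4 := norm_sub_le_norm_sub_add_norm_sub
      (exC p (fun s => Complex.exp (Complex.I * (u c s : ℂ)) *
        ∏ b ∈ A, Complex.exp (Complex.I * (u b s : ℂ)))) (P * R) (P * R')
    linarith

end Generic

section BlockCLT

lemma norm_prod_diff_le {B : Type*} [DecidableEq B] (A : Finset B) (f g : B → ℂ)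
    (hf : ∀ b, ‖f b‖ ≤ 1) (hg : ∀ b, ‖g b‖ ≤ 1) :
    ‖∏ b ∈ A, f b - ∏ b ∈ A, g b‖ ≤ ∑ b ∈ A, ‖f b - g b‖ := by
  induction A using Finset.induction_on with
  | empty => simp
  | insert c A hc ih =>
    rw [Finset.prod_insert hc, Finset.prod_insert hc, Finset.sum_insert hc]
    have h1 : f c * ∏ b ∈ A, f b - g c * ∏ b ∈ A, g b
      = (f c - g c) * ∏ b ∈ A, f b + g c * (∏ b ∈ A, f b - ∏ b ∈ A, g b) := by ring
    rw [h1]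
    refine (norm_add_le _ _).trans (add_le_add ?_ ?_)
    · rw [norm_mul]
      refine mul_le_of_le_one_right (norm_nonneg _) ?_
      rw [norm_prod]
      exact Finset.prod_le_one (fun _ _ => norm_nonneg _) (fun b _ => hf b)
    · rw [norm_mul]
      exact (mul_le_of_le_one_left (norm_nonneg _) (hg c)).trans ih

lemma exp_I_taylor {x : ℝ} (hx : |x| ≤ 1) :
    ‖Complex.exp (Complex.I * (x : ℂ)) - (1 + Complex.I * (x : ℂ) - ((x ^ 2 / 2 : ℝ) : ℂ))‖
      ≤ |x| * x ^ 2 := by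
  have hn : ‖Complex.I * (x : ℂ)‖ = |x| := by simp
  have h := Complex.exp_bound (x := Complex.I * (x : ℂ)) (by rw [hn]; exact hx) (n := 3) (by norm_num)
  rw [hn] at h
  simp only [Finset.sum_range_succ, Finset.sum_range_zero] at h
  have e : (0 : ℂ) + (Complex.I * (x : ℂ)) ^ 0 / (Nat.factorial 0 : ℕ)
      + (Complex.I * (x : ℂ)) ^ 1 / (Nat.factorial 1 : ℕ)
      + (Complex.I * (x : ℂ)) ^ 2 / (Nat.factorial 2 : ℕ)
      = 1 + Complex.I * (x : ℂ) - ((x ^ 2 / 2 : ℝ) : ℂ) := by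
    simp [Nat.factorial, mul_pow]
    ring
  rw [e] at h
  refine h.trans ?_
  have : |x| ^ 3 = |x| * x ^ 2 := by rw [← sq_abs x]; ring
  rw [this]
  refine mul_le_of_le_one_right (by positivity) ?_
  norm_num [Nat.factorial]

lemma single_block {Ω : Type*} [Fintype Ω] {p : Ω → ℝ} (hp : ∀ s, 0 ≤ p s) (h1 : ∑ s, p s = 1)
    (x : Ω → ℝ) (δ : ℝ) (hδ1 : δ ≤ 1) (hx : ∀ s, |x s| ≤ δ) (h0 : exR p x = 0) :
    ‖exC p (fun s => Complex.exp (Complex.I * (x s : ℂ)))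
      - Complex.exp (((-(exR p (fun s => x s ^ 2) / 2) : ℝ)) : ℂ)‖
      ≤ 2 * δ * exR p (fun s => x s ^ 2) := by
  set q := exR p (fun s => x s ^ 2) with hq
  have hΩ : Nonempty Ω := by
    by_contra h
    rw [not_nonempty_iff] at h
    simp at h1
  have hδ0 : 0 ≤ δ := (abs_nonneg _).trans (hx hΩ.some)
  have hq0 : 0 ≤ q := by
    have := exR_mono (f := fun _ => 0) (g := fun s => x s ^ 2) hp (fun s => sq_nonneg _)
    rwa [exR_const h1] at this
  have hqδ : q ≤ δ ^ 2 := by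
    have := exR_mono (f := fun s => x s ^ 2) (g := fun _ => δ ^ 2) hp
      (fun s => by rw [← sq_abs]; exact pow_le_pow_left₀ (abs_nonneg _) (hx s) 2)
    rwa [exR_const h1] at this
  have a1 : ‖exC p (fun s => Complex.exp (Complex.I * (x s : ℂ)))
      - ((1 - q / 2 : ℝ) : ℂ)‖ ≤ δ * q := by
    have e : ((1 - q / 2 : ℝ) : ℂ)
        = exC p (fun s => 1 + Complex.I * (x s : ℂ) - ((x s ^ 2 / 2 : ℝ) : ℂ)) := by
      apply Complex.ext
      · rw [exC_re]
        simp only [Complex.ofReal_re, Complex.sub_re, Complex.add_re, Complex.one_re,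
          Complex.mul_re, Complex.I_re, Complex.I_im, Complex.ofReal_im]
        have : (fun s => 1 + (0 * x s - 1 * 0) - x s ^ 2 / 2)
          = fun s => 1 - 1 / 2 * x s ^ 2 := by ext s; ring
        rw [this, exR_sub p (fun _ => 1), exR_const h1, exR_mul, ← hq]
        ring
      · rw [exC_im]
        simp only [Complex.ofReal_re, Complex.sub_im, Complex.add_im, Complex.one_im,
          Complex.mul_im, Complex.I_re, Complex.I_im, Complex.ofReal_im]
        have : (fun s => 0 + (0 * 0 + 1 * x s) - 0) = x := by ext s; ring
        rw [this, h0]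
    rw [e, ← exC_sub, hq, ← exR_mul]
    refine norm_exC_le hp _ _ fun s => ?_
    refine (exp_I_taylor ((hx s).trans hδ1)).trans ?_
    exact mul_le_mul_of_nonneg_right (hx s) (sq_nonneg _)
  have a2 : ‖((1 - q / 2 : ℝ) : ℂ) - Complex.exp (((-(q / 2) : ℝ)) : ℂ)‖ ≤ δ * q := by
    rw [← Complex.ofReal_exp, ← Complex.ofReal_sub, Complex.norm_real, Real.norm_eq_abs, abs_sub_comm]
    have hq1 : q ≤ 1 := by nlinarith
    have := Real.abs_exp_sub_one_sub_id_le (x := -(q / 2)) (by rw [abs_neg, abs_of_nonneg] <;> linarith)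
    rw [show Real.exp (-(q / 2)) - (1 - q / 2) = Real.exp (-(q / 2)) - 1 - -(q / 2) by ring]
    refine this.trans ?_
    nlinarith
  have := norm_sub_le_norm_sub_add_norm_sub (exC p (fun s => Complex.exp (Complex.I * (x s : ℂ))))
    ((1 - q / 2 : ℝ) : ℂ) (Complex.exp (((-(q / 2) : ℝ)) : ℂ))
  linarith

lemma exp_neg_diff {x y : ℝ} (hx : 0 ≤ x) (hy : 0 ≤ y) :
    |Real.exp (-x) - Real.exp (-y)| ≤ |x - y| := by
  have key : ∀ x y : ℝ, 0 ≤ x → x ≤ y → |Real.exp (-x) - Real.exp (-y)| ≤ |x - y| := by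
    intro x y hx hxy
    rw [abs_of_nonneg (by simpa using hxy), abs_sub_comm, abs_of_nonneg (by linarith)]
    have h1 : Real.exp (-y) = Real.exp (-x) * Real.exp (-(y - x)) := by
      rw [← Real.exp_add]; ring_nf
    have h2 := Real.add_one_le_exp (-(y - x))
    have h3 : Real.exp (-x) ≤ 1 := by simpa using hx
    have h4 := Real.exp_pos (-x)
    rw [h1]
    nlinarith
  rcases le_total x y with h | h
  · exact key x y hx h
  · rw [abs_sub_comm, abs_sub_comm x]
    exact key y x hy h

lemma block_sum {ι B : Type*} [Fintype ι] [DecidableEq B] (b : ι → B) (g : ι → ι → ℝ) :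
    ∑ β ∈ Finset.univ.image b, ∑ β' ∈ Finset.univ.image b,
      ∑ i with b i = β, ∑ j with b j = β', g i j = ∑ i, ∑ j, g i j := by
  have h1 : ∀ β : B, ∑ β' ∈ Finset.univ.image b, ∑ i with b i = β, ∑ j with b j = β', g i j
      = ∑ i with b i = β, ∑ j, g i j := fun β => by
    rw [Finset.sum_comm]
    refine Finset.sum_congr rfl fun i _ => ?_
    exact Finset.sum_fiberwise_of_maps_to (fun j _ => Finset.mem_image_of_mem b (Finset.mem_univ j)) _
  simp only [h1]
  exact Finset.sum_fiberwise_of_maps_to (fun j _ => Finset.mem_image_of_mem b (Finset.mem_univ j)) _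

lemma block_sum_ne {ι B : Type*} [Fintype ι] [DecidableEq B] (b : ι → B) (g : ι → ι → ℝ) :
    ∑ β ∈ Finset.univ.image b, ∑ β' ∈ Finset.univ.image b,
      (if β ≠ β' then ∑ i with b i = β, ∑ j with b j = β', g i j else 0)
      = ∑ i, ∑ j, if b i ≠ b j then g i j else 0 := by
  rw [← block_sum b]
  refine Finset.sum_congr rfl fun β _ => Finset.sum_congr rfl fun β' _ => ?_
  by_cases h : β = β'
  · rw [if_neg (by simpa using h)]
    symm
    refine Finset.sum_eq_zero fun i hi => Finset.sum_eq_zero fun j hj => ?_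
    simp only [Finset.mem_filter, Finset.mem_univ, true_and] at hi hj
    rw [if_neg]
    simp [hi, hj, h]
  · rw [if_pos h]
    refine Finset.sum_congr rfl fun i hi => Finset.sum_congr rfl fun j hj => ?_
    simp only [Finset.mem_filter, Finset.mem_univ, true_and] at hi hj
    rw [if_pos]
    simpa [hi, hj] using h

lemma block_sum_eq {ι B : Type*} [Fintype ι] [DecidableEq B] (b : ι → B) (g : ι → ι → ℝ) :
    ∑ β ∈ Finset.univ.image b, ∑ i with b i = β, ∑ j with b j = β, g i j
      = ∑ i, ∑ j, if b i = b j then g i j else 0 := by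
  rw [← Finset.sum_fiberwise_of_maps_to
    (fun j _ => Finset.mem_image_of_mem b (Finset.mem_univ j)) (fun i => ∑ j, _)]
  refine Finset.sum_congr rfl fun β _ => Finset.sum_congr rfl fun i hi => ?_
  simp only [Finset.mem_filter, Finset.mem_univ, true_and] at hi
  rw [Finset.sum_filter]
  refine Finset.sum_congr rfl fun j _ => ?_
  rw [hi]
  simp only [eq_comm]

lemma block_clt {Ω : Type*} [Fintype Ω] [DistribLattice Ω] {p : Ω → ℝ} (hp : IsFKG p)
    {ι B : Type*} [Fintype ι] [DecidableEq B] (b : ι → B) (W V : ι → Ω → ℝ)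
    (hWV : ∀ i, Dom (W i) (V i)) (hW1 : ∀ i s, |W i s| ≤ 1) (hW0 : ∀ i, exR p (W i) = 0)
    (m a t : ℝ) (ha : 0 ≤ a) (hm : ∀ β, ((Finset.univ.filter fun i => b i = β).card : ℝ) ≤ m)
    (hδ : |t| * a * m ≤ 1) :
    ‖exC p (fun s => Complex.exp (Complex.I * ((t * (a * ∑ i, W i s) : ℝ) : ℂ)))
      - Complex.exp (((-(t ^ 2 * (a ^ 2 * ∑ i, ∑ j, exR p (fun s => W i s * W j s)) / 2) : ℝ)) : ℂ)‖
    ≤ 4 * (t ^ 2 * a ^ 2 * ∑ i, ∑ j, if b i ≠ b j then covR p (V i) (V j) else 0)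
      + 2 * (|t| * a * m) * (t ^ 2 * a ^ 2 *
          ∑ i, ∑ j, if b i = b j then exR p (fun s => W i s * W j s) else 0)
      + t ^ 2 * a ^ 2 * ∑ i, ∑ j, if b i ≠ b j then |exR p (fun s => W i s * W j s)| else 0 := by
  classical
  set A := Finset.univ.image b with hA
  set u : B → Ω → ℝ := fun β s => ∑ i with b i = β, (t * a) * W i s with hu
  set U : B → Ω → ℝ := fun β s => ∑ i with b i = β, (|t| * a) * V i s with hU
  have hta : |t * a| = |t| * a := by rw [abs_mul, abs_of_nonneg ha]
  have hta0 : 0 ≤ |t| * a := by positivity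
  have hdom : ∀ β, Dom (u β) (U β) := fun β s s' h => by
    simp only [hu, hU]
    rw [← Finset.sum_sub_distrib, ← Finset.sum_sub_distrib]
    refine (Finset.abs_sum_le_sum_abs _ _).trans (Finset.sum_le_sum fun i _ => ?_)
    rw [← mul_sub, ← mul_sub, abs_mul, hta]
    exact mul_le_mul_of_nonneg_left (hWV i s s' h) hta0
  have h1 := hp.prod_bound u U hdom A
  have hcov : ∀ β β', covR p (U β) (U β')
      = ∑ i with b i = β, ∑ j with b j = β', t ^ 2 * a ^ 2 * covR p (V i) (V j) := fun β β' => by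
    simp only [hU]
    rw [covR_sum]
    refine Finset.sum_congr rfl fun i _ => Finset.sum_congr rfl fun j _ => ?_
    rw [covR_mul_mul, ← sq_abs t]
    ring
  simp only [hcov] at h1
  rw [block_sum_ne b] at h1
  have e1 : ∀ s, ∏ β ∈ A, Complex.exp (Complex.I * (u β s : ℂ))
      = Complex.exp (Complex.I * ((t * (a * ∑ i, W i s) : ℝ) : ℂ)) := fun s => by
    rw [← Complex.exp_sum, ← Finset.mul_sum, ← Complex.ofReal_sum]
    congr 3
    simp only [hu]
    rw [Finset.sum_fiberwise_of_maps_to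
      (fun j _ => Finset.mem_image_of_mem b (Finset.mem_univ j)), Finset.mul_sum, Finset.mul_sum]
    exact Finset.sum_congr rfl fun i _ => by ring
  simp only [e1] at h1
  -- single blocks
  have hq : ∀ β, exR p (fun s => u β s ^ 2)
      = ∑ i with b i = β, ∑ j with b j = β, t ^ 2 * a ^ 2 * exR p (fun s => W i s * W j s) := by
    intro β
    have : (fun s => u β s ^ 2) = fun s => ∑ i with b i = β, ∑ j with b j = β,
        (t ^ 2 * a ^ 2) * (W i s * W j s) := by
      ext s
      simp only [hu]
      rw [sq, Finset.sum_mul_sum]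
      exact Finset.sum_congr rfl fun i _ => Finset.sum_congr rfl fun j _ => by ring
    rw [this, exR_sum]
    refine Finset.sum_congr rfl fun i _ => ?_
    rw [exR_sum]
    exact Finset.sum_congr rfl fun j _ => exR_mul _ _ _
  have hq0 : ∀ β, 0 ≤ exR p (fun s => u β s ^ 2) := fun β => by
    have := exR_mono (f := fun _ => 0) (g := fun s => u β s ^ 2) hp.nonneg (fun s => sq_nonneg _)
    rwa [exR_const hp.sum_one] at this
  have hblk : ∀ β, ‖exC p (fun s => Complex.exp (Complex.I * (u β s : ℂ)))
      - Complex.exp (((-(exR p (fun s => u β s ^ 2) / 2) : ℝ)) : ℂ)‖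
      ≤ 2 * (|t| * a * m) * exR p (fun s => u β s ^ 2) := fun β => by
    refine single_block hp.nonneg hp.sum_one (u β) _ hδ (fun s => ?_) ?_
    · simp only [hu]
      refine (Finset.abs_sum_le_sum_abs _ _).trans ?_
      have : ∀ i ∈ Finset.univ.filter (fun i => b i = β), |t * a * W i s| ≤ |t| * a := fun i _ => by
        rw [abs_mul, hta]
        exact mul_le_of_le_one_right hta0 (hW1 i s)
      refine (Finset.sum_le_card_nsmul _ _ _ this).trans ?_
      rw [nsmul_eq_mul, mul_comm]
      exact mul_le_mul_of_nonneg_left (hm β) hta0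
    · simp only [hu]
      rw [exR_sum]
      exact Finset.sum_eq_zero fun i _ => by rw [exR_mul, hW0, mul_zero]
  have h2 := norm_prod_diff_le A (fun β => exC p (fun s => Complex.exp (Complex.I * (u β s : ℂ))))
    (fun β => Complex.exp (((-(exR p (fun s => u β s ^ 2) / 2) : ℝ)) : ℂ))
    (fun β => by
      have := norm_exC_le hp.nonneg (fun s => Complex.exp (Complex.I * (u β s : ℂ))) (fun _ => 1)
        (fun s => by rw [mul_comm, Complex.norm_exp_ofReal_mul_I])
      rwa [exR_const hp.sum_one] at this)
    (fun β => by
      rw [← Complex.ofReal_exp, Complex.norm_real, Real.norm_eq_abs, abs_of_pos (Real.exp_pos _)]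
      rw [Real.exp_le_one_iff]
      linarith [hq0 β])
  have h3 := h2.trans (Finset.sum_le_sum fun β _ => hblk β)
  rw [← Finset.mul_sum, ← Complex.exp_sum, ← Complex.ofReal_sum] at h3
  have hQ : ∑ β ∈ A, exR p (fun s => u β s ^ 2) = t ^ 2 * a ^ 2 *
          ∑ i, ∑ j, if b i = b j then exR p (fun s => W i s * W j s) else 0 := by
    simp only [hq]
    rw [block_sum_eq b, Finset.mul_sum]
    refine Finset.sum_congr rfl fun i _ => ?_
    rw [Finset.mul_sum]
    refine Finset.sum_congr rfl fun j _ => ?_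
    split_ifs <;> simp
  have hQ' : ∑ β ∈ A, -(exR p (fun s => u β s ^ 2) / 2) = -((t ^ 2 * a ^ 2 *
          ∑ i, ∑ j, if b i = b j then exR p (fun s => W i s * W j s) else 0) / 2) := by
    rw [Finset.sum_neg_distrib, ← Finset.sum_div, hQ]
  have hQ0 : 0 ≤ t ^ 2 * a ^ 2 *
          ∑ i, ∑ j, if b i = b j then exR p (fun s => W i s * W j s) else 0 := by
    rw [← hQ]; exact Finset.sum_nonneg fun β _ => hq0 β
  rw [hQ, hQ'] at h3
  have hT0 : 0 ≤ ∑ i, ∑ j, exR p (fun s => W i s * W j s) := by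
    have e : ∑ i, ∑ j, exR p (fun s => W i s * W j s) = exR p (fun s => (∑ i, W i s) ^ 2) := by
      simp only [sq, Finset.sum_mul_sum]
      rw [exR_sum]
      exact Finset.sum_congr rfl fun i _ => by rw [exR_sum]
    rw [e]
    have := exR_mono (f := fun _ => 0) (g := fun s => (∑ i, W i s) ^ 2) hp.nonneg
      (fun s => sq_nonneg _)
    rwa [exR_const hp.sum_one] at this
  set QQ := t ^ 2 * a ^ 2 *
          ∑ i, ∑ j, if b i = b j then exR p (fun s => W i s * W j s) else 0 with hQQ
  set TT := ∑ i, ∑ j, exR p (fun s => W i s * W j s) with hTT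
  set NN := ∑ i, ∑ j, if b i ≠ b j then |exR p (fun s => W i s * W j s)| else 0 with hNN
  have hNN0 : |TT - ∑ i, ∑ j, if b i = b j then exR p (fun s => W i s * W j s) else 0| ≤ NN := by
    rw [hTT, ← Finset.sum_sub_distrib]
    refine (Finset.abs_sum_le_sum_abs _ _).trans (Finset.sum_le_sum fun i _ => ?_)
    rw [← Finset.sum_sub_distrib]
    refine (Finset.abs_sum_le_sum_abs _ _).trans (Finset.sum_le_sum fun j _ => ?_)
    by_cases h : b i = b j <;> simp [h]
  have h4 : ‖Complex.exp ((-(QQ / 2) : ℝ) : ℂ) - Complex.exp ((-(t ^ 2 * (a ^ 2 * TT) / 2) : ℝ) : ℂ)‖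
      ≤ t ^ 2 * a ^ 2 * NN := by
    rw [← Complex.ofReal_exp, ← Complex.ofReal_exp, ← Complex.ofReal_sub, Complex.norm_real,
      Real.norm_eq_abs]
    refine (exp_neg_diff (by linarith) (by positivity)).trans ?_
    rw [hQQ, abs_sub_comm]
    rw [show ∀ z : ℝ, t ^ 2 * (a ^ 2 * TT) / 2 - t ^ 2 * a ^ 2 * z / 2
      = t ^ 2 * a ^ 2 / 2 * (TT - z) from fun z => by ring]
    rw [abs_mul, abs_of_nonneg (by positivity)]
    have h0 : 0 ≤ NN := (abs_nonneg _).trans hNN0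
    calc _ ≤ t ^ 2 * a ^ 2 / 2 * NN := mul_le_mul_of_nonneg_left hNN0 (by positivity)
      _ ≤ _ := by
        have : 0 ≤ t ^ 2 * a ^ 2 * NN := by positivity
        linarith
  have h5 : ∑ i, ∑ j, (if b i ≠ b j then t ^ 2 * a ^ 2 * covR p (V i) (V j) else 0)
      = t ^ 2 * a ^ 2 * ∑ i, ∑ j, if b i ≠ b j then covR p (V i) (V j) else 0 := by
    rw [Finset.mul_sum]
    refine Finset.sum_congr rfl fun i _ => ?_
    rw [Finset.mul_sum]
    refine Finset.sum_congr rfl fun j _ => ?_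
    split_ifs <;> simp
  rw [h5] at h1
  refine (norm_sub_le_norm_sub_add_norm_sub _ _ _).trans (add_le_add
    ((norm_sub_le_norm_sub_add_norm_sub _ _ _).trans (add_le_add h1 h3)) h4)

end BlockCLT

section Combi

lemma hermite_shift (l : ℕ) (hl : 0 < l) (z : ℤ) :
    ∑ a ∈ Finset.range l, (z + a) / (l : ℤ) = z + ∑ a ∈ Finset.range l, (0 + (a : ℤ)) / (l : ℤ) := by
  have hl' : (l : ℤ) ≠ 0 := by positivity
  have step : ∀ z : ℤ, ∑ a ∈ Finset.range l, (z + 1 + a) / (l : ℤ)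
      = ∑ a ∈ Finset.range l, (z + a) / (l : ℤ) + 1 := fun z => by
    have h1 := Finset.sum_range_succ (fun a : ℕ => (z + a) / (l : ℤ)) l
    have h2 := Finset.sum_range_succ' (fun a : ℕ => (z + a) / (l : ℤ)) l
    rw [h1] at h2
    have h3 : (z + l) / (l : ℤ) = z / l + 1 := by
      rw [Int.add_ediv_of_dvd_right (dvd_refl _), Int.ediv_self hl']
    have h4 : ∑ a ∈ Finset.range l, (z + 1 + a) / (l : ℤ)
        = ∑ a ∈ Finset.range l, (z + ((a + 1 : ℕ) : ℤ)) / (l : ℤ) :=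
      Finset.sum_congr rfl fun a _ => by push_cast; ring_nf
    rw [h4]
    simp only [Nat.cast_zero, add_zero] at h2
    linarith
  induction z using Int.induction_on with
  | zero => simp
  | succ n ih => rw [step, ih]; ring
  | pred n ih =>
    have := step (-(n : ℤ) - 1)
    rw [sub_add_cancel] at this
    linarith

lemma shift_count (l : ℕ) (hl : 0 < l) (x y : ℤ) :
    ∑ a ∈ Finset.range l, (if (x + a) / (l : ℤ) ≠ (y + a) / (l : ℤ) then (1 : ℤ) else 0)
      ≤ |x - y| := by
  have hl' : (0 : ℤ) < l := by positivity
  have key : ∀ x y : ℤ, x ≤ y →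
      ∑ a ∈ Finset.range l, (if (x + a) / (l : ℤ) ≠ (y + a) / (l : ℤ) then (1 : ℤ) else 0)
      ≤ y - x := fun x y h => by
    have : y - x = ∑ a ∈ Finset.range l, ((y + a) / (l : ℤ) - (x + a) / (l : ℤ)) := by
      rw [Finset.sum_sub_distrib, hermite_shift l hl x, hermite_shift l hl y]
      ring
    rw [this]
    refine Finset.sum_le_sum fun a _ => ?_
    have h1 : (x + a) / (l : ℤ) ≤ (y + a) / (l : ℤ) := Int.ediv_le_ediv hl' (by linarith)
    split_ifs with h2
    · have : (x + a) / (l : ℤ) < (y + a) / (l : ℤ) := lt_of_le_of_ne h1 h2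
      linarith
    · linarith
  rcases le_total x y with h | h
  · rw [abs_sub_comm, abs_of_nonneg (by linarith)]
    exact key x y h
  · rw [abs_of_nonneg (by linarith)]
    simpa only [ne_comm] using key y x h

/-- shifted blocks -/
def blk {d : ℕ} (l a : ℕ) (i : Fin d → ℤ) : Fin d → ℤ := fun k => (i k + a) / (l : ℤ)

lemma blk_count {d : ℕ} (l : ℕ) (hl : 0 < l) (i j : Fin d → ℤ) :
    ∑ a ∈ Finset.range l, (if blk l a i ≠ blk l a j then (1 : ℝ) else 0) ≤ (l1dist i j : ℝ) := by
  have : ∑ a ∈ Finset.range l, (if blk l a i ≠ blk l a j then (1 : ℤ) else 0) ≤ l1dist i j := by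
    unfold l1dist
    calc _ ≤ ∑ a ∈ Finset.range l, ∑ k : Fin d,
          (if (i k + a) / (l : ℤ) ≠ (j k + a) / (l : ℤ) then (1 : ℤ) else 0) := by
          refine Finset.sum_le_sum fun a _ => ?_
          have h0 : ∀ k : Fin d, 0 ≤
            (if (i k + a) / (l : ℤ) ≠ (j k + a) / (l : ℤ) then (1 : ℤ) else 0) := fun k => by
            split_ifs <;> norm_num
          split_ifs with h
          · obtain ⟨k, hk⟩ := Function.ne_iff.1 h
            have := Finset.single_le_sum (fun k _ => h0 k) (Finset.mem_univ k)
            refine le_trans ?_ this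
            have hk' : (i k + a) / (l : ℤ) ≠ (j k + a) / (l : ℤ) := hk
            rw [if_pos hk']
          · exact Finset.sum_nonneg fun k _ => h0 k
      _ ≤ _ := by
          rw [Finset.sum_comm]
          exact Finset.sum_le_sum fun k _ => shift_count l hl _ _
  have h2 : ((∑ a ∈ Finset.range l, (if blk l a i ≠ blk l a j then (1 : ℤ) else 0) : ℤ) : ℝ)
      ≤ (l1dist i j : ℝ) := by exact_mod_cast this
  refine le_trans (le_of_eq ?_) h2
  push_cast
  rfl

lemma exists_shift {d n : ℕ} (l : ℕ) (hl : 0 < l)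
    (D : LatticeVertex d n → LatticeVertex d n → ℝ) (hD : ∀ i j, 0 ≤ D i j) :
    ∃ a : ℕ, ∑ i, ∑ j, (if blk l a i.1 ≠ blk l a j.1 then D i j else 0)
      ≤ (∑ i, ∑ j, (l1dist i.1 j.1 : ℝ) * D i j) / l := by
  by_contra hcon
  push Not at hcon
  have h1 : ∑ a ∈ Finset.range l, (∑ i, ∑ j, (l1dist i.1 j.1 : ℝ) * D i j) / l
      < ∑ a ∈ Finset.range l, ∑ i, ∑ j, (if blk l a i.1 ≠ blk l a j.1 then D i j else 0) :=
    Finset.sum_lt_sum_of_nonempty (by simpa using hl.ne') fun a _ => hcon a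
  rw [Finset.sum_const, Finset.card_range, nsmul_eq_mul, mul_div_cancel₀ _ (by positivity)] at h1
  refine absurd h1 (not_lt.2 ?_)
  rw [Finset.sum_comm]
  refine Finset.sum_le_sum fun i _ => ?_
  rw [Finset.sum_comm]
  refine Finset.sum_le_sum fun j _ => ?_
  have := mul_le_mul_of_nonneg_right (blk_count l hl i.1 j.1) (hD i j)
  refine le_trans (le_of_eq ?_) this
  rw [Finset.sum_mul]
  refine Finset.sum_congr rfl fun a _ => ?_
  split_ifs <;> simp

lemma blk_card {d n : ℕ} (l a : ℕ) (hl : 0 < l) (β : Fin d → ℤ) :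
    (Finset.univ.filter fun i : LatticeVertex d n => blk l a i.1 = β).card ≤ l ^ d := by
  have hl' : (0 : ℤ) < l := by positivity
  let S : Finset (Fin d → ℤ) := Fintype.piFinset fun k => Finset.Ico (l * β k - a) (l * β k - a + l)
  have hS : S.card = l ^ d := by
    simp [S, Fintype.card_piFinset]
  rw [← hS]
  refine Finset.card_le_card_of_injOn (fun i => i.1) (fun i hi => ?_)
    (fun i _ j _ h => Subtype.ext h)
  simp only [Finset.coe_filter, Finset.mem_univ, true_and, Set.mem_ofPred_eq] at hi
  simp only [S, Finset.mem_coe, Fintype.mem_piFinset, Finset.mem_Ico]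
  intro k
  have h := congrFun hi k
  unfold blk at h
  have h1 := Int.mul_ediv_add_emod (i.1 k + a) l
  have h2 := Int.emod_nonneg (i.1 k + a) hl'.ne'
  have h3 := Int.emod_lt_of_pos (i.1 k + a) hl'
  rw [h] at h1
  constructor <;> linarith

lemma summable_exp_int (c : ℝ) (hc : 0 < c) : Summable (fun z : ℤ => Real.exp (-c * |(z : ℝ)|)) := by
  have h1 : Summable (fun n : ℕ => Real.exp (-c * n)) := by
    have := summable_geometric_of_lt_one (Real.exp_pos (-c)).le (by simpa using hc)
    refine this.congr fun n => ?_
    rw [← Real.exp_nat_mul]; ring_nf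
  refine Summable.of_nat_of_neg ?_ ?_
  · refine h1.congr fun n => ?_
    simp
  · refine h1.congr fun n => ?_
    simp

lemma exists_sum_bound (d : ℕ) (c : ℝ) (hc : 0 < c) : ∃ M : ℝ, 0 ≤ M ∧
    ∀ n (i : LatticeVertex d n), ∑ j : LatticeVertex d n,
      Real.exp (-c * (l1dist i.1 j.1 : ℝ)) ≤ M := by
  refine ⟨(∑' z : ℤ, Real.exp (-c * |(z : ℝ)|)) ^ d, by positivity, fun n i => ?_⟩
  have h1 : ∑ j : LatticeVertex d n, Real.exp (-c * (l1dist i.1 j.1 : ℝ))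
      = ∑ j ∈ latticeBox d n, ∏ k, Real.exp (-c * |((i.1 k - j k : ℤ) : ℝ)|) := by
    rw [← Finset.sum_coe_sort (latticeBox d n)
      (fun j => ∏ k, Real.exp (-c * |((i.1 k - j k : ℤ) : ℝ)|))]
    refine Finset.sum_congr rfl fun j _ => ?_
    rw [← Real.exp_sum, ← Finset.mul_sum]
    unfold l1dist
    push_cast
    rfl
  rw [h1]
  unfold latticeBox
  rw [← Finset.prod_univ_sum (fun _ : Fin d =>
    Finset.Icc (-(latticeRadius d n)) (latticeRadius d n))
    (fun k z => Real.exp (-c * |((i.1 k - z : ℤ) : ℝ)|))]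
  rw [← Fin.prod_const]
  refine Finset.prod_le_prod (fun k _ => by positivity) fun k _ => ?_
  have hs := summable_exp_int c hc
  have e : ∑' z : ℤ, Real.exp (-c * |(z : ℝ)|)
      = ∑' z : ℤ, Real.exp (-c * |((i.1 k - z : ℤ) : ℝ)|) :=
    ((Equiv.subLeft (i.1 k)).tsum_eq (fun z : ℤ => Real.exp (-c * |(z : ℝ)|))).symm
  rw [e]
  refine Summable.sum_le_tsum _ (fun z _ => by positivity) ?_
  exact ((Equiv.subLeft (i.1 k)).summable_iff (f := fun z : ℤ => Real.exp (-c * |(z : ℝ)|))).2 hs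

lemma l1dist_nonneg {d : ℕ} (i j : Fin d → ℤ) : 0 ≤ l1dist i j :=
  Finset.sum_nonneg fun _ _ => abs_nonneg _

lemma exists_sum_bound' (d : ℕ) (c : ℝ) (hc : 0 < c) : ∃ M : ℝ, 0 ≤ M ∧
    (∀ n (i : LatticeVertex d n), ∑ j : LatticeVertex d n,
      Real.exp (-c * (l1dist i.1 j.1 : ℝ)) ≤ M) ∧
    ∀ n (i : LatticeVertex d n), ∑ j : LatticeVertex d n,
      (l1dist i.1 j.1 : ℝ) * Real.exp (-c * (l1dist i.1 j.1 : ℝ)) ≤ M := by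
  obtain ⟨M1, h10, h1⟩ := exists_sum_bound d c hc
  obtain ⟨M2, h20, h2⟩ := exists_sum_bound d (c / 2) (by positivity)
  refine ⟨M1 + 2 / c * M2, by positivity, fun n i => (h1 n i).trans ?_, fun n i => ?_⟩
  · have : 0 ≤ 2 / c * M2 := by positivity
    linarith
  have : ∑ j : LatticeVertex d n, (l1dist i.1 j.1 : ℝ) * Real.exp (-c * (l1dist i.1 j.1 : ℝ))
      ≤ 2 / c * ∑ j : LatticeVertex d n, Real.exp (-(c / 2) * (l1dist i.1 j.1 : ℝ)) := by
    rw [Finset.mul_sum]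
    refine Finset.sum_le_sum fun j _ => ?_
    set x : ℝ := (l1dist i.1 j.1 : ℝ)
    have e : Real.exp (-c * x) = Real.exp (-(c / 2) * x) * Real.exp (-(c / 2) * x) := by
      rw [← Real.exp_add]; ring_nf
    have k1 := Real.add_one_le_exp (c / 2 * x)
    have k2 : Real.exp (c / 2 * x) * Real.exp (-(c / 2) * x) = 1 := by
      rw [← Real.exp_add]; simp
    have k3 := Real.exp_pos (-(c / 2) * x)
    have k4 : x * Real.exp (-(c / 2) * x) ≤ 2 / c := by
      rw [le_div_iff₀ hc]
      nlinarith
    rw [e, ← mul_assoc]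
    exact mul_le_mul_of_nonneg_right k4 k3.le
  have := mul_le_mul_of_nonneg_left (h2 n i) (by positivity : 0 ≤ 2 / c)
  linarith

lemma latticeRadius_nonneg (d n : ℕ) : 0 ≤ latticeRadius d n := by
  unfold latticeRadius
  exact Int.floor_nonneg.2 (by positivity)

lemma card_vertex (d n : ℕ) : Fintype.card (LatticeVertex d n) = latticeN d n := by
  simp [latticeN]

lemma le_latticeN (d n : ℕ) (hd : 1 ≤ d) : (n : ℝ) ≤ latticeN d n := by
  have hR := latticeRadius_nonneg d n
  have h1 : (latticeN d n : ℝ) = ((2 * latticeRadius d n + 1 : ℤ) : ℝ) ^ d := by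
    have : (latticeN d n : ℤ) = (2 * latticeRadius d n + 1) ^ d := by
      unfold latticeN latticeBox
      rw [Fintype.card_piFinset]
      simp only [Int.card_Icc, Finset.prod_const, Finset.card_univ, Fintype.card_fin, Nat.cast_pow]
      congr 1
      rw [Int.toNat_of_nonneg (by linarith)]
      ring
    exact_mod_cast this
  have h2 : (n : ℝ) ^ ((1 : ℝ) / d) ≤ ((2 * latticeRadius d n + 1 : ℤ) : ℝ) := by
    have := Int.lt_floor_add_one ((n : ℝ) ^ ((1 : ℝ) / d))
    change _ < (latticeRadius d n : ℝ) + 1 at this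
    have h3 : (0 : ℝ) ≤ latticeRadius d n := by exact_mod_cast hR
    push_cast
    linarith
  rw [h1]
  calc (n : ℝ) = ((n : ℝ) ^ ((1 : ℝ) / d)) ^ d := by
        rw [← Real.rpow_natCast, ← Real.rpow_mul (by positivity), one_div,
          inv_mul_cancel₀ (by positivity), Real.rpow_one]
    _ ≤ _ := pow_le_pow_left₀ (by positivity) h2 d

lemma latticeN_pos (d n : ℕ) : 0 < latticeN d n := by
  unfold latticeN
  refine Finset.card_pos.2 ⟨fun _ => 0, ?_⟩
  have := latticeRadius_nonneg d n
  simp [latticeBox, this]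

lemma exists_nbr (d n : ℕ) (hd : 1 ≤ d) (hn : 1 ≤ n) (i : LatticeVertex d n) :
    ∃ j : LatticeVertex d n, l1dist i.1 j.1 = 1 := by
  have hR : 1 ≤ latticeRadius d n := by
    unfold latticeRadius
    rw [Int.le_floor]
    push_cast
    exact Real.one_le_rpow (by exact_mod_cast hn) (by positivity)
  let k0 : Fin d := ⟨0, hd⟩
  have hi := i.2
  simp only [latticeBox, Fintype.mem_piFinset, Finset.mem_Icc] at hi
  have key : ∀ e : ℤ, |e| = 1 → (-(latticeRadius d n) ≤ i.1 k0 + e ∧ i.1 k0 + e ≤ latticeRadius d n) →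
      ∃ j : LatticeVertex d n, l1dist i.1 j.1 = 1 := fun e he hb => by
    refine ⟨⟨Function.update i.1 k0 (i.1 k0 + e), ?_⟩, ?_⟩
    · simp only [latticeBox, Fintype.mem_piFinset, Finset.mem_Icc]
      intro k
      by_cases h : k = k0
      · subst h; simpa using hb
      · simpa [Function.update_of_ne h] using hi k
    · unfold l1dist
      rw [Finset.sum_eq_single k0]
      · simpa using he
      · intro k _ h
        simp [Function.update_of_ne h]
      · simp
  by_cases h : i.1 k0 < latticeRadius d n
  · exact key 1 (by simp) ⟨by linarith [(hi k0).1], by linarith⟩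
  · exact key (-1) (by simp) ⟨by linarith, by linarith [(hi k0).2]⟩

end Combi

section IsingFinite

set_option linter.unusedSectionVars false

variable {ι : Type*} [Fintype ι] [DecidableEq ι]

/-- Ising probability mass on boolean configurations -/
def ip (β : ℝ) (Q : Matrix ι ι ℝ) (s : ι → Bool) : ℝ :=
  isingWeight β Q (pmVec s) / isingZ ι β Q

lemma isingWeight_pos (β : ℝ) (Q : Matrix ι ι ℝ) (z : ι → ℝ) : 0 < isingWeight β Q z :=
  Real.exp_pos _

lemma isingZ_pos (β : ℝ) (Q : Matrix ι ι ℝ) : 0 < isingZ ι β Q :=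
  Finset.sum_pos (fun _ _ => isingWeight_pos _ _ _) Finset.univ_nonempty

lemma quad_eq (Q : Matrix ι ι ℝ) (z : ι → ℝ) :
    z ⬝ᵥ Q.mulVec z = ∑ i, ∑ j, Q i j * (z i * z j) := by
  simp only [dotProduct, Matrix.mulVec, Finset.mul_sum]
  exact Finset.sum_congr rfl fun i _ => Finset.sum_congr rfl fun j _ => by ring

lemma pm_super (a b : ι → Bool) (i j : ι) :
    pmVec a i * pmVec a j + pmVec b i * pmVec b j
      ≤ pmVec (a ⊓ b) i * pmVec (a ⊓ b) j + pmVec (a ⊔ b) i * pmVec (a ⊔ b) j := by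
  rcases Bool.eq_false_or_eq_true (a i) with h1 | h1 <;>
  rcases Bool.eq_false_or_eq_true (a j) with h2 | h2 <;>
  rcases Bool.eq_false_or_eq_true (b i) with h3 | h3 <;>
  rcases Bool.eq_false_or_eq_true (b j) with h4 | h4 <;>
  norm_num [pmVec, h1, h2, h3, h4]

lemma ip_fkg (β : ℝ) (hβ : 0 ≤ β) (Q : Matrix ι ι ℝ) (hQ : ∀ i j, 0 ≤ Q i j) : IsFKG (ip β Q) where
  nonneg s := (div_pos (isingWeight_pos _ _ _) (isingZ_pos _ _)).le
  sum_one := by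
    unfold ip
    rw [← Finset.sum_div]
    exact div_self (isingZ_pos β Q).ne'
  lattice a b := by
    unfold ip
    rw [div_mul_div_comm, div_mul_div_comm]
    refine div_le_div_of_nonneg_right ?_ (mul_pos (isingZ_pos _ _) (isingZ_pos _ _)).le
    unfold isingWeight
    rw [← Real.exp_add, ← Real.exp_add, Real.exp_le_exp, ← mul_add, ← mul_add]
    refine mul_le_mul_of_nonneg_left ?_ (by positivity)
    simp only [quad_eq, ← Finset.sum_add_distrib, ← mul_add]
    exact Finset.sum_le_sum fun i _ => Finset.sum_le_sum fun j _ =>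
      mul_le_mul_of_nonneg_left (pm_super a b i j) (hQ i j)

lemma integral_ising {E : Type*} [NormedAddCommGroup E] [NormedSpace ℝ E] [CompleteSpace E]
    (β : ℝ) (Q : Matrix ι ι ℝ) (f : (ι → ℝ) → E) :
    ∫ z, f z ∂(isingMeasure ι β Q) = ∑ s, ip β Q s • f (pmVec s) := by
  unfold isingMeasure
  rw [integral_finsetSum_measure]
  · refine Finset.sum_congr rfl fun s _ => ?_
    rw [integral_smul_measure, integral_dirac, ENNReal.toReal_ofReal]
    · rfl
    · exact (div_pos (isingWeight_pos _ _ _) (isingZ_pos _ _)).le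
  · intro s _
    refine Integrable.smul_measure ?_ ENNReal.ofReal_ne_top
    exact integrable_dirac (by simp)

instance ising_prob (β : ℝ) (Q : Matrix ι ι ℝ) : IsProbabilityMeasure (isingMeasure ι β Q) := by
  constructor
  unfold isingMeasure
  simp only [Measure.coe_finsetSum, Finset.sum_apply, Measure.smul_apply, smul_eq_mul,
    measure_univ, mul_one]
  rw [← ENNReal.ofReal_sum_of_nonneg
    (fun s _ => (div_pos (isingWeight_pos _ _ _) (isingZ_pos _ _)).le), ← Finset.sum_div]
  rw [show ∑ s : ι → Bool, isingWeight β Q (pmVec s) = isingZ ι β Q from rfl,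
    div_self (isingZ_pos β Q).ne', ENNReal.ofReal_one]

lemma coordCov_ising (β : ℝ) (Q : Matrix ι ι ℝ) (i j : ι) :
    coordCov (isingMeasure ι β Q) i j
      = covR (ip β Q) (fun s => pmVec s i) (fun s => pmVec s j) := by
  unfold coordCov covR exR
  simp only [integral_ising, smul_eq_mul]

lemma pm_flip (s : ι → Bool) : pmVec (fun i => !(s i)) = -pmVec s := by
  ext i
  rcases Bool.eq_false_or_eq_true (s i) with h1 | h1 <;> simp [pmVec, h1]

lemma ip_flip (β : ℝ) (Q : Matrix ι ι ℝ) (s : ι → Bool) : ip β Q (fun i => !(s i)) = ip β Q s := by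
  unfold ip isingWeight
  rw [pm_flip, Matrix.mulVec_neg, dotProduct_neg, neg_dotProduct, neg_neg]

lemma ip_mean (β : ℝ) (Q : Matrix ι ι ℝ) (i : ι) : exR (ip β Q) (fun s => pmVec s i) = 0 := by
  let e : (ι → Bool) ≃ (ι → Bool) :=
    ⟨fun s i => !(s i), fun s i => !(s i), fun s => by simp, fun s => by simp⟩
  have h := e.sum_comp (fun s => ip β Q s * pmVec s i)
  have h2 : ∀ s, ip β Q (e s) * pmVec (e s) i = - (ip β Q s * pmVec s i) := fun s => by
    change ip β Q (fun i => !(s i)) * pmVec (fun i => !(s i)) i = _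
    rw [ip_flip, pm_flip, Pi.neg_apply]
    ring
  simp only [h2, Finset.sum_neg_distrib] at h
  unfold exR
  linarith

lemma pm_mono (i : ι) : Monotone (fun s : ι → Bool => pmVec s i) := fun s s' h => by
  have := h i
  simp only [pmVec]
  revert this
  cases s i <;> cases s' i <;> simp

lemma pm_sq (s : ι → Bool) (i : ι) : pmVec s i * pmVec s i = 1 := by
  simp only [pmVec]
  cases s i <;> simp

lemma pm_abs (s : ι → Bool) (i : ι) : |pmVec s i| = 1 := by
  simp only [pmVec]
  cases s i <;> simp

lemma ip_nbr (β : ℝ) (hβ : 0 ≤ β) (Q : Matrix ι ι ℝ) (hQ : ∀ i j, 0 ≤ Q i j) (i j : ι)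
    (hij : i ≠ j) (h1 : Q i j = 1) (h2 : Q j i = 1) :
    Real.tanh β ≤ covR (ip β Q) (fun s => pmVec s i) (fun s => pmVec s j) := by
  set Q' : Matrix ι ι ℝ := fun k l => if (k = i ∧ l = j) ∨ (k = j ∧ l = i) then 0 else Q k l with hQ'
  have hQ'0 : ∀ k l, 0 ≤ Q' k l := fun k l => by
    simp only [hQ']; split_ifs
    · rfl
    · exact hQ k l
  have hq : ∀ z : ι → ℝ, z ⬝ᵥ Q.mulVec z = z ⬝ᵥ Q'.mulVec z + 2 * (z i * z j) := fun z => by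
    rw [quad_eq, quad_eq]
    have e : ∀ k l, Q k l * (z k * z l) = Q' k l * (z k * z l)
        + ((if k = i then (if l = j then z i * z j else 0) else 0)
          + (if k = j then (if l = i then z i * z j else 0) else 0)) := fun k l => by
      simp only [hQ']
      by_cases a1 : k = i
      · subst a1
        by_cases a2 : l = j
        · subst a2
          simp [hij, h1]
        · simp [a2, hij]
      · by_cases a3 : k = j
        · subst a3
          by_cases a4 : l = i
          · subst a4
            simp [h2, a1]
            ring
          · simp [a4, a1]
        · simp [a1, a3]
    simp only [e, Finset.sum_add_distrib]
    simp
    ring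
  have hw : ∀ s : ι → Bool, isingWeight β Q (pmVec s) = isingWeight β Q' (pmVec s) *
      (Real.cosh β + pmVec s i * pmVec s j * Real.sinh β) := fun s => by
    unfold isingWeight
    rw [hq, mul_add, Real.exp_add]
    congr 1
    rw [show β / 2 * (2 * (pmVec s i * pmVec s j)) = β * (pmVec s i * pmVec s j) by ring]
    have : pmVec s i * pmVec s j = 1 ∨ pmVec s i * pmVec s j = -1 := by
      simp only [pmVec]
      cases s i <;> cases s j <;> simp
    rcases this with h | h <;> rw [h]
    · simp [Real.cosh_add_sinh]
    · simp [← Real.cosh_sub_sinh, sub_eq_add_neg]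
  have hcov := (ip_fkg β hβ Q' hQ'0).cov_nonneg (pm_mono i) (pm_mono j)
  unfold covR at hcov ⊢
  rw [ip_mean, zero_mul, sub_zero] at hcov ⊢
  set A := ∑ s, isingWeight β Q' (pmVec s) * (pmVec s i * pmVec s j) with hA
  have hE' : exR (ip β Q') (fun s => pmVec s i * pmVec s j) = A / isingZ ι β Q' := by
    unfold exR ip
    rw [hA, Finset.sum_div]
    exact Finset.sum_congr rfl fun s _ => by ring
  have hA0 : 0 ≤ A := by
    rw [hE'] at hcov
    by_contra h
    push Not at h
    exact absurd hcov (not_le.2 (div_neg_of_neg_of_pos h (isingZ_pos _ _)))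
  have hE : exR (ip β Q) (fun s => pmVec s i * pmVec s j)
      = (∑ s, isingWeight β Q (pmVec s) * (pmVec s i * pmVec s j)) / isingZ ι β Q := by
    unfold exR ip
    rw [Finset.sum_div]
    exact Finset.sum_congr rfl fun s _ => by ring
  have hZ : isingZ ι β Q = Real.cosh β * isingZ ι β Q' + Real.sinh β * A := by
    unfold isingZ
    rw [hA, Finset.mul_sum, Finset.mul_sum, ← Finset.sum_add_distrib]
    exact Finset.sum_congr rfl fun s _ => by rw [hw]; ring
  have hN : ∑ s, isingWeight β Q (pmVec s) * (pmVec s i * pmVec s j)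
      = Real.cosh β * A + Real.sinh β * isingZ ι β Q' := by
    unfold isingZ
    rw [hA, Finset.mul_sum, Finset.mul_sum, ← Finset.sum_add_distrib]
    refine Finset.sum_congr rfl fun s _ => ?_
    rw [hw]
    have e : (pmVec s i * pmVec s j) * (pmVec s i * pmVec s j) = 1 := by
      rw [mul_mul_mul_comm, pm_sq, pm_sq, one_mul]
    linear_combination (isingWeight β Q' (pmVec s) * Real.sinh β) * e
  have hc := Real.cosh_pos β
  have hcs := Real.cosh_sq β
  rw [hE, hN, Real.tanh_eq_sinh_div_cosh, div_le_div_iff₀ hc (isingZ_pos β Q), hZ]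
  nlinarith [isingZ_pos β Q']

end IsingFinite

section Joint

set_option linter.unusedSectionVars false

variable {Ω₁ Ω₂ : Type*} [Fintype Ω₁] [Fintype Ω₂]

/-- product mass function -/
def jp (p : Ω₁ → ℝ) (q : Ω₂ → ℝ) : Ω₁ × Ω₂ → ℝ := fun st => p st.1 * q st.2

lemma exR_jp (p : Ω₁ → ℝ) (q : Ω₂ → ℝ) (f : Ω₁ → ℝ) (g : Ω₂ → ℝ) :
    exR (jp p q) (fun st => f st.1 * g st.2) = exR p f * exR q g := by
  unfold exR jp
  rw [Fintype.sum_prod_type, Finset.sum_mul_sum]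
  exact Finset.sum_congr rfl fun s _ => Finset.sum_congr rfl fun t _ => by ring

lemma exR_jp_fst (p : Ω₁ → ℝ) (q : Ω₂ → ℝ) (hq : ∑ s, q s = 1) (f : Ω₁ → ℝ) :
    exR (jp p q) (fun st => f st.1) = exR p f := by
  have := exR_jp p q f (fun _ => 1)
  rw [exR_const hq] at this
  simpa using this

lemma exR_jp_snd (p : Ω₁ → ℝ) (q : Ω₂ → ℝ) (hp : ∑ s, p s = 1) (g : Ω₂ → ℝ) :
    exR (jp p q) (fun st => g st.2) = exR q g := by
  have := exR_jp p q (fun _ => 1) g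
  rw [exR_const hp] at this
  simpa using this

lemma jp_fkg [DistribLattice Ω₁] [DistribLattice Ω₂] {p : Ω₁ → ℝ} {q : Ω₂ → ℝ}
    (hp : IsFKG p) (hq : IsFKG q) : IsFKG (jp p q) where
  nonneg s := mul_nonneg (hp.nonneg _) (hq.nonneg _)
  sum_one := by
    have := exR_jp p q (fun _ => 1) (fun _ => 1)
    rw [exR_const hp.sum_one, exR_const hq.sum_one] at this
    simpa [exR] using this
  lattice a b := by
    unfold jp
    have h1 := hp.lattice a.1 b.1
    have h2 := hq.lattice a.2 b.2
    have := mul_le_mul h1 h2 (mul_nonneg (hq.nonneg _) (hq.nonneg _))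
      (mul_nonneg (hp.nonneg _) (hp.nonneg _))
    calc _ = p a.1 * p b.1 * (q a.2 * q b.2) := by ring
      _ ≤ _ := this
      _ = _ := by simp only [Prod.fst_inf, Prod.snd_inf, Prod.fst_sup, Prod.snd_sup]; ring

variable {ι : Type*} [Fintype ι]

/-- product spins -/
def Wf (i : ι) (st : (ι → Bool) × (ι → Bool)) : ℝ := pmVec st.1 i * pmVec st.2 i

/-- sum of spins -/
def Vf (i : ι) (st : (ι → Bool) × (ι → Bool)) : ℝ := pmVec st.1 i + pmVec st.2 i

lemma dom_WV [DecidableEq ι] (i : ι) : Dom (Wf i) (Vf i) := fun s s' h => by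
  have h1 := pm_mono i h.1
  have h2 := pm_mono i h.2
  have a1 := pm_abs s.1 i
  have a2 := pm_abs s'.2 i
  unfold Wf Vf
  have : pmVec s'.1 i * pmVec s'.2 i - pmVec s.1 i * pmVec s.2 i
    = (pmVec s'.1 i - pmVec s.1 i) * pmVec s'.2 i + pmVec s.1 i * (pmVec s'.2 i - pmVec s.2 i) := by
    ring
  rw [this]
  refine (abs_add_le _ _).trans ?_
  rw [abs_mul, abs_mul, a1, a2, abs_of_nonneg (by simpa using h1), abs_of_nonneg (by simpa using h2)]
  linarith

lemma Wf_abs [DecidableEq ι] (i : ι) (st : (ι → Bool) × (ι → Bool)) : |Wf i st| ≤ 1 := by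
  unfold Wf
  rw [abs_mul, pm_abs, pm_abs, one_mul]

lemma cov_V [DecidableEq ι] {p q : (ι → Bool) → ℝ} (hp : ∑ s, p s = 1) (hq : ∑ s, q s = 1) (i j : ι) :
    covR (jp p q) (Vf i) (Vf j) = covR p (fun s => pmVec s i) (fun s => pmVec s j)
      + covR q (fun s => pmVec s i) (fun s => pmVec s j) := by
  unfold covR Vf
  rw [exR_add _ (fun st : (ι → Bool) × (ι → Bool) => pmVec st.1 i),
    exR_add _ (fun st : (ι → Bool) × (ι → Bool) => pmVec st.1 j)]
  have e : (fun st : (ι → Bool) × (ι → Bool) =>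
      (pmVec st.1 i + pmVec st.2 i) * (pmVec st.1 j + pmVec st.2 j))
      = fun st => (pmVec st.1 i * pmVec st.1 j + pmVec st.2 i * pmVec st.2 j)
        + (pmVec st.1 i * pmVec st.2 j + pmVec st.1 j * pmVec st.2 i) := by
    ext st; ring
  rw [e, exR_add, exR_add, exR_add, exR_jp_fst p q hq (fun s => pmVec s i * pmVec s j),
    exR_jp_snd p q hp (fun s => pmVec s i * pmVec s j),
    exR_jp p q (fun s => pmVec s i) (fun s => pmVec s j),
    exR_jp p q (fun s => pmVec s j) (fun s => pmVec s i),
    exR_jp_fst p q hq (fun s => pmVec s i), exR_jp_fst p q hq (fun s => pmVec s j),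
    exR_jp_snd p q hp (fun s => pmVec s i), exR_jp_snd p q hp (fun s => pmVec s j)]
  ring

lemma ex_WW [DecidableEq ι] (p q : (ι → Bool) → ℝ) (i j : ι) :
    exR (jp p q) (fun st => Wf i st * Wf j st) = exR p (fun s => pmVec s i * pmVec s j)
      * exR q (fun s => pmVec s i * pmVec s j) := by
  rw [← exR_jp]
  congr 1
  ext st
  unfold Wf
  ring

lemma mean_sq [DecidableEq ι] (p : (ι → Bool) → ℝ) :
    exR p (fun s => sampleMean (pmVec s) ^ 2)
      = (∑ i, ∑ j, exR p (fun s => pmVec s i * pmVec s j)) / (Fintype.card ι : ℝ) ^ 2 := by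
  unfold sampleMean
  have : (fun s : ι → Bool => ((∑ i, pmVec s i) / (Fintype.card ι : ℝ)) ^ 2)
    = fun s => ((Fintype.card ι : ℝ) ^ 2)⁻¹ * ∑ i, ∑ j, pmVec s i * pmVec s j := by
    ext s
    rw [← Finset.sum_mul_sum]
    ring
  rw [this, exR_mul, exR_sum, mul_comm, div_eq_mul_inv]
  congr 1
  exact Finset.sum_congr rfl fun i _ => by rw [exR_sum]

/-- deterministic comparison -/
lemma sampleCov_eq [Nonempty ι] (x y : ι → ℝ) :
    sampleCov x y = (∑ i, x i * y i) / (Fintype.card ι : ℝ) - sampleMean x * sampleMean y := by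
  have hN : (Fintype.card ι : ℝ) ≠ 0 := by positivity
  unfold sampleCov
  have : ∑ i, (x i - sampleMean x) * (y i - sampleMean y)
      = ∑ i, x i * y i - (Fintype.card ι : ℝ) * (sampleMean x * sampleMean y) := by
    have hx : ∑ i, x i = (Fintype.card ι : ℝ) * sampleMean x := by
      unfold sampleMean; field_simp
    have hy : ∑ i, y i = (Fintype.card ι : ℝ) * sampleMean y := by
      unfold sampleMean; field_simp
    have e : ∀ i, (x i - sampleMean x) * (y i - sampleMean y) = x i * y i - sampleMean y * x i
      - sampleMean x * y i + sampleMean x * sampleMean y := fun i => by ring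
    simp only [e, Finset.sum_add_distrib, Finset.sum_sub_distrib, ← Finset.mul_sum, hx, hy,
      Finset.sum_const, Finset.card_univ, nsmul_eq_mul]
    ring
  rw [this, sub_div, mul_div_cancel_left₀ _ hN]

lemma sampleVar_eq [Nonempty ι] (x : ι → ℝ) (hx : ∀ i, x i * x i = 1) :
    ∑ i, (x i - sampleMean x) ^ 2 = (Fintype.card ι : ℝ) * (1 - sampleMean x ^ 2) := by
  have hN : (Fintype.card ι : ℝ) ≠ 0 := by positivity
  have := sampleCov_eq x x
  simp only [hx, Finset.sum_const, Finset.card_univ, nsmul_eq_mul, mul_one] at this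
  unfold sampleCov at this
  rw [div_self hN, div_eq_iff hN] at this
  simp only [sq]
  rw [this]
  ring

lemma corr_cov_le [Nonempty ι] (x y : ι → ℝ) (hx : ∀ i, x i * x i = 1) (hy : ∀ i, y i * y i = 1) :
    |sampleCorr x y - sampleCov x y| ≤ sampleMean x ^ 2 + sampleMean y ^ 2 := by
  have hN : 0 < (Fintype.card ι : ℝ) := by positivity
  have hCS := Finset.sum_mul_sq_le_sq_mul_sq Finset.univ (fun i => x i - sampleMean x)
    (fun i => y i - sampleMean y)
  have nx : 0 ≤ ∑ i, (x i - sampleMean x) ^ 2 := Finset.sum_nonneg fun _ _ => sq_nonneg _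
  have ny : 0 ≤ ∑ i, (y i - sampleMean y) ^ 2 := Finset.sum_nonneg fun _ _ => sq_nonneg _
  unfold sampleCorr sampleCov
  rw [← Real.sqrt_mul nx]
  set C := ∑ i, (x i - sampleMean x) * (y i - sampleMean y)
  rw [sampleVar_eq x hx, sampleVar_eq y hy] at *
  set N := (Fintype.card ι : ℝ)
  set a := sampleMean x ^ 2 with ha
  set b := sampleMean y ^ 2 with hb
  have ha0 : 0 ≤ a := sq_nonneg _
  have hb0 : 0 ≤ b := sq_nonneg _
  have ha1 : 0 ≤ 1 - a := by
    by_contra h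
    push Not at h
    nlinarith
  have hb1 : 0 ≤ 1 - b := by
    by_contra h
    push Not at h
    nlinarith
  set P := Real.sqrt (N * (1 - a) * (N * (1 - b))) with hP
  have hP0 : 0 ≤ P := Real.sqrt_nonneg _
  have hCP : |C| ≤ P := Real.abs_le_sqrt hCS
  have hu1 : (1 - a) * (1 - b) ≤ 1 := by nlinarith
  have hu0 : 0 ≤ (1 - a) * (1 - b) := mul_nonneg ha1 hb1
  have hPN : P ≤ N := by
    rw [hP]
    apply Real.sqrt_le_iff.2 ⟨hN.le, ?_⟩
    calc _ = N ^ 2 * ((1 - a) * (1 - b)) := by ring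
      _ ≤ N ^ 2 * 1 := by gcongr
      _ = _ := by ring
  have hPl : N * ((1 - a) * (1 - b)) ≤ P := by
    refine Real.le_sqrt_of_sq_le ?_
    calc _ = N ^ 2 * ((1 - a) * (1 - b)) * ((1 - a) * (1 - b)) := by ring
      _ ≤ N ^ 2 * ((1 - a) * (1 - b)) * 1 := by gcongr
      _ = _ := by ring
  rcases hP0.eq_or_lt with h | h
  · rw [← h] at hCP
    have hC : C = 0 := abs_eq_zero.1 (le_antisymm hCP (abs_nonneg _))
    rw [hC]
    simpa using add_nonneg ha0 hb0
  · have e : C / P - C / N = C * (1 / P - 1 / N) := by ring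
    have h3 : 0 ≤ 1 / P - 1 / N := sub_nonneg.2 (one_div_le_one_div_of_le h hPN)
    rw [e, abs_mul, abs_of_nonneg h3]
    calc _ ≤ P * (1 / P - 1 / N) := mul_le_mul_of_nonneg_right hCP h3
      _ = 1 - P / N := by rw [mul_sub, mul_one_div_cancel h.ne']; ring
      _ ≤ 1 - (1 - a) * (1 - b) := by
        have : (1 - a) * (1 - b) ≤ P / N := by rw [le_div_iff₀ hN]; linarith
        linarith
      _ ≤ a + b := by nlinarith

lemma cov_approx [Nonempty ι] (x y : ι → ℝ) :
    |Real.sqrt (Fintype.card ι) * sampleCov x y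
      - (Real.sqrt (Fintype.card ι))⁻¹ * ∑ i, x i * y i|
      ≤ 2 * Real.sqrt (Fintype.card ι) * (sampleMean x ^ 2 + sampleMean y ^ 2) := by
  have hN : 0 < (Fintype.card ι : ℝ) := by positivity
  set r := Real.sqrt (Fintype.card ι) with hr
  have hr0 : 0 < r := Real.sqrt_pos.2 hN
  have hrr : (Fintype.card ι : ℝ) = r * r := (Real.mul_self_sqrt hN.le).symm
  rw [sampleCov_eq, hrr]
  have e : r * ((∑ i, x i * y i) / (r * r) - sampleMean x * sampleMean y) - r⁻¹ * ∑ i, x i * y i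
    = - (r * (sampleMean x * sampleMean y)) := by
    field_simp
    ring
  rw [e, abs_neg, abs_mul, abs_of_pos hr0, mul_comm 2 r, mul_assoc]
  refine mul_le_mul_of_nonneg_left ?_ hr0.le
  rw [abs_le]
  constructor <;> nlinarith [sq_nonneg (sampleMean x + sampleMean y), sq_nonneg (sampleMean x - sampleMean y)]

lemma corr_approx [Nonempty ι] (x y : ι → ℝ) (hx : ∀ i, x i * x i = 1) (hy : ∀ i, y i * y i = 1) :
    |Real.sqrt (Fintype.card ι) * sampleCorr x y
      - (Real.sqrt (Fintype.card ι))⁻¹ * ∑ i, x i * y i|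
      ≤ 3 * Real.sqrt (Fintype.card ι) * (sampleMean x ^ 2 + sampleMean y ^ 2) := by
  have h1 := cov_approx x y
  have h2 := corr_cov_le x y hx hy
  set r := Real.sqrt (Fintype.card ι) with hr
  have hr0 : 0 ≤ r := Real.sqrt_nonneg _
  have h3 : |r * sampleCorr x y - r * sampleCov x y| ≤ r * (sampleMean x ^ 2 + sampleMean y ^ 2) := by
    rw [← mul_sub, abs_mul, abs_of_nonneg hr0]
    exact mul_le_mul_of_nonneg_left h2 hr0
  have h4 := abs_sub_le (r * sampleCorr x y) (r * sampleCov x y) (r⁻¹ * ∑ i, x i * y i)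
  linarith

lemma exp_I_lip (x y : ℝ) : ‖Complex.exp (Complex.I * (x : ℂ)) - Complex.exp (Complex.I * (y : ℂ))‖
    ≤ |x - y| := by
  have : Complex.exp (Complex.I * (x : ℂ)) - Complex.exp (Complex.I * (y : ℂ))
      = Complex.exp (Complex.I * (y : ℂ)) * (Complex.exp (Complex.I * ((x - y : ℝ) : ℂ)) - 1) := by
    rw [mul_sub, ← Complex.exp_add]
    congr 2
    · push_cast; ring
    · ring
  rw [this, norm_mul, mul_comm Complex.I (y : ℂ), Complex.norm_exp_ofReal_mul_I, one_mul]
  exact Real.norm_exp_I_mul_ofReal_sub_one_le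

lemma exC_diff {Ω : Type*} [Fintype Ω] {p : Ω → ℝ} (hp : ∀ s, 0 ≤ p s) (f g h : Ω → ℝ) (t : ℝ)
    (hh : ∀ s, |f s - g s| ≤ h s) :
    ‖exC p (fun s => Complex.exp (Complex.I * ((t * f s : ℝ) : ℂ)))
      - exC p (fun s => Complex.exp (Complex.I * ((t * g s : ℝ) : ℂ)))‖ ≤ |t| * exR p h := by
  rw [← exC_sub, ← exR_mul]
  refine norm_exC_le hp _ _ fun s => (exp_I_lip _ _).trans ?_
  rw [← mul_sub, abs_mul]
  exact mul_le_mul_of_nonneg_left (hh s) (abs_nonneg _)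

lemma charFun_joint [DecidableEq ι] (β₁ β₂ : ℝ) (Q : Matrix ι ι ℝ)
    (g : (ι → ℝ) × (ι → ℝ) → ℝ) (hg : Measurable g) (t : ℝ) :
    charFun (Measure.map g ((isingMeasure ι β₁ Q).prod (isingMeasure ι β₂ Q))) t
      = exC (jp (ip β₁ Q) (ip β₂ Q)) (fun st =>
        Complex.exp (Complex.I * ((t * g (pmVec st.1, pmVec st.2) : ℝ) : ℂ))) := by
  rw [charFun_apply_real, integral_map hg.aemeasurable (by fun_prop), integral_prod]
  · simp only [integral_ising]
    unfold exC jp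
    rw [Fintype.sum_prod_type]
    refine Finset.sum_congr rfl fun s _ => ?_
    rw [Finset.smul_sum]
    refine Finset.sum_congr rfl fun s' _ => ?_
    simp only [Complex.real_smul]
    push_cast
    rw [mul_comm Complex.I, ← mul_assoc]
  · refine Integrable.of_bound (C := 1) (by fun_prop) (ae_of_all _ fun x => ?_)
    rw [← Complex.ofReal_mul, Complex.norm_exp_ofReal_mul_I]

lemma measurable_sampleMean : Measurable (sampleMean (ι := ι)) := by
  unfold sampleMean
  fun_prop

lemma measurable_sampleCov :
    Measurable (fun p : (ι → ℝ) × (ι → ℝ) => sampleCov p.1 p.2) := by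
  unfold sampleCov sampleMean
  fun_prop

lemma measurable_sampleCorr :
    Measurable (fun p : (ι → ℝ) × (ι → ℝ) => sampleCorr p.1 p.2) := by
  unfold sampleCorr sampleMean
  fun_prop

end Joint

section Final

lemma latticeQ_nonneg (d n : ℕ) (i j : LatticeVertex d n) : 0 ≤ latticeQ d n i j := by
  unfold latticeQ
  split_ifs <;> norm_num

instance (d n : ℕ) : Nonempty (LatticeVertex d n) := by
  rw [← Fintype.card_pos_iff, card_vertex]
  exact latticeN_pos d n

lemma l1dist_self {d : ℕ} (i : Fin d → ℤ) : l1dist i i = 0 := by simp [l1dist]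

lemma l1dist_comm {d : ℕ} (i j : Fin d → ℤ) : l1dist i j = l1dist j i := by
  simp only [l1dist, abs_sub_comm]

/-- second moment of the spins -/
lemma ex_pm_cov {ι : Type*} [Fintype ι] [DecidableEq ι] (β : ℝ) (Q : Matrix ι ι ℝ) (i j : ι) :
    exR (ip β Q) (fun s => pmVec s i * pmVec s j) = coordCov (isingMeasure ι β Q) i j := by
  rw [coordCov_ising]
  unfold covR
  rw [ip_mean]
  simp

lemma ex_pm_bounds {d n : ℕ} {β c : ℝ} (hβ : 0 < β)
    (hpos : ∀ (i j : LatticeVertex d n), i ≠ j → 0 ≤ coordCov (latticeIsing d n β) i j)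
    (hdec : ∀ (i j : LatticeVertex d n), i ≠ j →
      coordCov (latticeIsing d n β) i j ≤ Real.exp (-c * (l1dist i.1 j.1 : ℝ)))
    (i j : LatticeVertex d n) :
    0 ≤ exR (ip β (latticeQ d n)) (fun s => pmVec s i * pmVec s j) ∧
    exR (ip β (latticeQ d n)) (fun s => pmVec s i * pmVec s j)
      ≤ Real.exp (-c * (l1dist i.1 j.1 : ℝ)) := by
  by_cases h : i = j
  · subst h
    simp only [pm_sq]
    rw [exR_const (ip_fkg β hβ.le _ (latticeQ_nonneg d n)).sum_one, l1dist_self]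
    simp
  · rw [ex_pm_cov]
    exact ⟨hpos i j h, hdec i j h⟩

lemma charFun_bound {d n : ℕ} {β₁ β₂ c M : ℝ} (hβ₁ : 0 < β₁) (hβ₂ : 0 < β₂) (hc : 0 < c)
    (hM1 : ∀ i : LatticeVertex d n, ∑ j : LatticeVertex d n,
      Real.exp (-c * (l1dist i.1 j.1 : ℝ)) ≤ M)
    (hM2 : ∀ i : LatticeVertex d n, ∑ j : LatticeVertex d n,
      (l1dist i.1 j.1 : ℝ) * Real.exp (-c * (l1dist i.1 j.1 : ℝ)) ≤ M)
    (hposX : ∀ (i j : LatticeVertex d n), i ≠ j → 0 ≤ coordCov (latticeIsing d n β₁) i j)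
    (hposY : ∀ (i j : LatticeVertex d n), i ≠ j → 0 ≤ coordCov (latticeIsing d n β₂) i j)
    (hdecX : ∀ (i j : LatticeVertex d n), i ≠ j →
      coordCov (latticeIsing d n β₁) i j ≤ Real.exp (-c * (l1dist i.1 j.1 : ℝ)))
    (hdecY : ∀ (i j : LatticeVertex d n), i ≠ j →
      coordCov (latticeIsing d n β₂) i j ≤ Real.exp (-c * (l1dist i.1 j.1 : ℝ)))
    (t : ℝ) (l : ℕ) (hl : 0 < l)
    (hδ : |t| * (Real.sqrt (latticeN d n))⁻¹ * (l : ℝ) ^ d ≤ 1) :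
    ‖exC (jp (ip β₁ (latticeQ d n)) (ip β₂ (latticeQ d n))) (fun st =>
        Complex.exp (Complex.I * ((t * ((Real.sqrt (latticeN d n))⁻¹ * ∑ i, Wf i st) : ℝ) : ℂ)))
      - Complex.exp (((-(t ^ 2 * (1 + (latticeN d n : ℝ)⁻¹ *
        ∑ i : LatticeVertex d n, ∑ j : LatticeVertex d n,
          if i ≠ j then
            coordCov (latticeIsing d n β₁) i j * coordCov (latticeIsing d n β₂) i j
          else 0) / 2) : ℝ)) : ℂ)‖
    ≤ 9 * t ^ 2 * M / l + 2 * (|t| * (Real.sqrt (latticeN d n))⁻¹ * (l : ℝ) ^ d) * (t ^ 2 * M) := by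
  have hp := ip_fkg β₁ hβ₁.le _ (latticeQ_nonneg d n)
  have hq := ip_fkg β₂ hβ₂.le _ (latticeQ_nonneg d n)
  set p := ip β₁ (latticeQ d n) with hpdef
  set q := ip β₂ (latticeQ d n) with hqdef
  set D : LatticeVertex d n → LatticeVertex d n → ℝ :=
    fun i j => Real.exp (-c * (l1dist i.1 j.1 : ℝ)) with hD
  have hD0 : ∀ i j, 0 ≤ D i j := fun i j => (Real.exp_pos _).le
  have hDle : ∀ i j, D i j ≤ 1 := fun i j => by
    simp only [hD]
    rw [Real.exp_le_one_iff]
    have : (0 : ℝ) ≤ l1dist i.1 j.1 := by exact_mod_cast l1dist_nonneg _ _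
    nlinarith
  have hX := ex_pm_bounds hβ₁ hposX hdecX
  have hY := ex_pm_bounds hβ₂ hposY hdecY
  have hN : (0 : ℝ) < latticeN d n := by exact_mod_cast latticeN_pos d n
  set N : ℝ := (latticeN d n : ℝ) with hNdef
  have hcard : (Fintype.card (LatticeVertex d n) : ℝ) = N := by rw [card_vertex]
  set a := (Real.sqrt N)⁻¹ with ha
  have ha2 : a ^ 2 = N⁻¹ := by rw [ha, inv_pow, Real.sq_sqrt hN.le]
  obtain ⟨sh, hsh⟩ := exists_shift l hl D hD0
  have hL : ∑ i, ∑ j, (l1dist i.1 j.1 : ℝ) * D i j ≤ N * M := by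
    rw [← hcard, ← nsmul_eq_mul]
    exact Finset.sum_le_card_nsmul _ _ _ fun i _ => hM2 i
  have hS : ∑ i, ∑ j, D i j ≤ N * M := by
    rw [← hcard, ← nsmul_eq_mul]
    exact Finset.sum_le_card_nsmul _ _ _ fun i _ => hM1 i
  have hl0 : (0 : ℝ) < l := by exact_mod_cast hl
  have hcross : ∑ i, ∑ j, (if blk l sh i.1 ≠ blk l sh j.1 then D i j else 0) ≤ N * M / l :=
    hsh.trans (div_le_div_of_nonneg_right hL hl0.le)
  have hW0 : ∀ i : LatticeVertex d n, exR (jp p q) (Wf i) = 0 := fun i => by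
    have := exR_jp p q (fun s => pmVec s i) (fun s => pmVec s i)
    rw [ip_mean, zero_mul] at this
    exact this
  have key := block_clt (jp_fkg hp hq) (fun i : LatticeVertex d n => blk l sh i.1) Wf Vf dom_WV
    Wf_abs hW0 ((l : ℝ) ^ d) a t (by positivity)
    (fun β => by exact_mod_cast blk_card l sh hl β) hδ
  have hWW : ∀ i j : LatticeVertex d n, 0 ≤ exR (jp p q) (fun s => Wf i s * Wf j s) ∧
      exR (jp p q) (fun s => Wf i s * Wf j s) ≤ D i j := fun i j => by
    rw [ex_WW]
    refine ⟨mul_nonneg (hX i j).1 (hY i j).1, ?_⟩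
    calc _ ≤ D i j * 1 := mul_le_mul (hX i j).2 ((hY i j).2.trans (hDle i j)) (hY i j).1 (hD0 i j)
      _ = _ := mul_one _
  -- identify the variance
  have hvar : a ^ 2 * ∑ i : LatticeVertex d n, ∑ j : LatticeVertex d n,
      exR (jp p q) (fun s => Wf i s * Wf j s)
      = 1 + N⁻¹ * ∑ i : LatticeVertex d n, ∑ j : LatticeVertex d n,
          if i ≠ j then
            coordCov (latticeIsing d n β₁) i j * coordCov (latticeIsing d n β₂) i j
          else 0 := by
    have e : ∀ i j : LatticeVertex d n, exR (jp p q) (fun s => Wf i s * Wf j s)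
        = (if i = j then 1 else 0) + (if i ≠ j then
            coordCov (latticeIsing d n β₁) i j * coordCov (latticeIsing d n β₂) i j
          else 0) := fun i j => by
      rw [ex_WW]
      by_cases h : i = j
      · subst h
        simp only [pm_sq]
        rw [exR_const hp.sum_one, exR_const hq.sum_one]
        simp
      · rw [ex_pm_cov, ex_pm_cov, if_neg h, if_pos h, zero_add]
        rfl
    simp only [e, Finset.sum_add_distrib]
    rw [ha2, mul_add]
    congr 1
    simp only [Finset.sum_ite_eq, Finset.mem_univ, if_true, Finset.sum_const, Finset.card_univ,
      nsmul_eq_mul, mul_one]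
    rw [hcard]
    exact inv_mul_cancel₀ hN.ne'
  rw [hvar] at key
  refine key.trans ?_
  have b1 : ∑ i : LatticeVertex d n, ∑ j : LatticeVertex d n,
      (if blk l sh i.1 ≠ blk l sh j.1 then covR (jp p q) (Vf i) (Vf j) else 0)
      ≤ 2 * (N * M / l) := by
    refine le_trans ?_ (mul_le_mul_of_nonneg_left hcross (by norm_num))
    rw [Finset.mul_sum]
    refine Finset.sum_le_sum fun i _ => ?_
    rw [Finset.mul_sum]
    refine Finset.sum_le_sum fun j _ => ?_
    split_ifs with h
    · rw [cov_V hp.sum_one hq.sum_one]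
      have z1 : ∀ k, exR p (fun s => pmVec s k) = 0 := fun k => ip_mean _ _ _
      have z2 : ∀ k, exR q (fun s => pmVec s k) = 0 := fun k => ip_mean _ _ _
      unfold covR
      rw [z1, z2, z1, z2]
      have h1 := (hX i j).2
      have h2 := (hY i j).2
      rw [← hpdef] at h1
      rw [← hqdef] at h2
      simp only [hD]
      linarith
    · simp
  have b2 : ∑ i : LatticeVertex d n, ∑ j : LatticeVertex d n,
      (if blk l sh i.1 = blk l sh j.1 then exR (jp p q) (fun s => Wf i s * Wf j s) else 0)
      ≤ N * M := by
    refine le_trans ?_ hS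
    refine Finset.sum_le_sum fun i _ => Finset.sum_le_sum fun j _ => ?_
    split_ifs with h
    · exact (hWW i j).2
    · exact hD0 i j
  have b3 : ∑ i : LatticeVertex d n, ∑ j : LatticeVertex d n,
      (if blk l sh i.1 ≠ blk l sh j.1 then |exR (jp p q) (fun s => Wf i s * Wf j s)| else 0)
      ≤ N * M / l := by
    refine le_trans ?_ hcross
    refine Finset.sum_le_sum fun i _ => Finset.sum_le_sum fun j _ => ?_
    split_ifs with h
    · rw [abs_of_nonneg (hWW i j).1]
      exact (hWW i j).2
    · exact le_rfl
  rw [ha2]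
  have c0 : 0 ≤ t ^ 2 * N⁻¹ := by positivity
  have c1 := mul_le_mul_of_nonneg_left b1 c0
  have c2 := mul_le_mul_of_nonneg_left b2 c0
  have c3 := mul_le_mul_of_nonneg_left b3 c0
  have d1 : t ^ 2 * N⁻¹ * (2 * (N * M / l)) = 2 * (t ^ 2 * M / l) := by field_simp
  have d2 : t ^ 2 * N⁻¹ * (N * M) = t ^ 2 * M := by field_simp
  have d3 : t ^ 2 * N⁻¹ * (N * M / l) = t ^ 2 * M / l := by field_simp
  rw [d1] at c1
  rw [d2] at c2
  rw [d3] at c3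
  have ha0 : 0 ≤ a := by positivity
  have c4 := mul_le_mul_of_nonneg_left c2 (by positivity : 0 ≤ 2 * (|t| * a * (l : ℝ) ^ d))
  have e9 : 9 * t ^ 2 * M / l = 9 * (t ^ 2 * M / l) := by ring
  rw [e9]
  linarith

lemma mean_sq_bound {d n : ℕ} {β c M : ℝ} (hβ : 0 < β)
    (hM1 : ∀ i : LatticeVertex d n, ∑ j : LatticeVertex d n,
      Real.exp (-c * (l1dist i.1 j.1 : ℝ)) ≤ M)
    (hpos : ∀ (i j : LatticeVertex d n), i ≠ j → 0 ≤ coordCov (latticeIsing d n β) i j)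
    (hdec : ∀ (i j : LatticeVertex d n), i ≠ j →
      coordCov (latticeIsing d n β) i j ≤ Real.exp (-c * (l1dist i.1 j.1 : ℝ))) :
    exR (ip β (latticeQ d n)) (fun s => sampleMean (pmVec s) ^ 2) ≤ M / latticeN d n := by
  have hN : (0 : ℝ) < latticeN d n := by exact_mod_cast latticeN_pos d n
  rw [mean_sq, card_vertex]
  have hS : ∑ i : LatticeVertex d n, ∑ j : LatticeVertex d n,
      exR (ip β (latticeQ d n)) (fun s => pmVec s i * pmVec s j) ≤ latticeN d n * M := by
    rw [← card_vertex, ← nsmul_eq_mul]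
    refine Finset.sum_le_card_nsmul _ _ _ fun i _ => ?_
    exact (Finset.sum_le_sum fun j _ => (ex_pm_bounds hβ hpos hdec i j).2).trans (hM1 i)
  calc _ ≤ latticeN d n * M / (latticeN d n : ℝ) ^ 2 := div_le_div_of_nonneg_right hS (by positivity)
    _ = _ := by field_simp

lemma tendsto_dist_of_charFun (μ : ℕ → Measure ℝ) [∀ n, IsProbabilityMeasure (μ n)]
    (ν : Measure ℝ) [IsProbabilityMeasure ν]
    (h : ∀ t, Tendsto (fun n => charFun (μ n) t) atTop (𝓝 (charFun ν t))) :
    _root_.TendstoInDistribution μ ν := by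
  have := (ProbabilityMeasure.tendsto_iff_tendsto_charFun
    (μ := fun n => (⟨μ n, inferInstance⟩ : ProbabilityMeasure ℝ))
    (μ₀ := (⟨ν, inferInstance⟩ : ProbabilityMeasure ℝ))).2 h
  exact ProbabilityMeasure.tendsto_iff_forall_integral_tendsto.1 this

end Final

section Conclusion

lemma tendsto_of_block_bound (e : ℕ → ℂ) (N : ℕ → ℝ) (hN : Tendsto N atTop atTop) (t M : ℝ) (d : ℕ)
    (h : ∀ n l : ℕ, 0 < l → |t| * (Real.sqrt (N n))⁻¹ * (l : ℝ) ^ d ≤ 1 →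
      ‖e n‖ ≤ 9 * t ^ 2 * M / l + 2 * (|t| * (Real.sqrt (N n))⁻¹ * (l : ℝ) ^ d) * (t ^ 2 * M)) :
    Tendsto e atTop (𝓝 0) := by
  rw [NormedAddGroup.tendsto_nhds_zero]
  intro ε hε
  have h1 : Tendsto (fun l : ℕ => 9 * t ^ 2 * M / (l : ℝ)) atTop (𝓝 0) :=
    tendsto_const_div_atTop_nhds_zero_nat _
  obtain ⟨l, hl1, hl2⟩ := ((h1.eventually (gt_mem_nhds (half_pos hε))).and
    (eventually_gt_atTop 0)).exists
  have h2 : Tendsto (fun n => |t| * (Real.sqrt (N n))⁻¹ * (l : ℝ) ^ d) atTop (𝓝 0) := by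
    have : Tendsto (fun n => (Real.sqrt (N n))⁻¹) atTop (𝓝 0) :=
      tendsto_inv_atTop_zero.comp (Real.tendsto_sqrt_atTop.comp hN)
    simpa using (this.const_mul |t|).mul_const ((l : ℝ) ^ d)
  have h3 : Tendsto (fun n => 2 * (|t| * (Real.sqrt (N n))⁻¹ * (l : ℝ) ^ d) * (t ^ 2 * M))
      atTop (𝓝 0) := by
    simpa using (h2.const_mul 2).mul_const (t ^ 2 * M)
  filter_upwards [h2.eventually (gt_mem_nhds one_pos), h3.eventually (gt_mem_nhds (half_pos hε))]
    with n hn1 hn2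
  have := h n l hl2 hn1.le
  linarith

lemma tanh_pos_of_pos {β : ℝ} (h : 0 < β) : 0 < Real.tanh β := by
  rw [Real.tanh_eq_sinh_div_cosh]
  exact div_pos (Real.sinh_pos_iff.2 h) (Real.cosh_pos _)

lemma lattice_nbr_cov (d n : ℕ) (β : ℝ) (hβ : 0 < β) (i j : LatticeVertex d n)
    (hij : l1dist i.1 j.1 = 1) : Real.tanh β ≤ coordCov (latticeIsing d n β) i j := by
  unfold latticeIsing
  rw [coordCov_ising]
  refine ip_nbr β hβ.le _ (latticeQ_nonneg d n) i j ?_ ?_ ?_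
  · rintro rfl
    rw [l1dist_self] at hij
    exact absurd hij (by norm_num)
  · simp [latticeQ, hij]
  · rw [l1dist_comm] at hij
    simp [latticeQ, hij]

lemma kappa_lower (d n : ℕ) (hd : 1 ≤ d) (hn : 1 ≤ n) (β₁ β₂ : ℝ) (hβ₁ : 0 < β₁) (hβ₂ : 0 < β₂)
    (hposX : ∀ (i j : LatticeVertex d n), i ≠ j → 0 ≤ coordCov (latticeIsing d n β₁) i j)
    (hposY : ∀ (i j : LatticeVertex d n), i ≠ j → 0 ≤ coordCov (latticeIsing d n β₂) i j) :
    Real.tanh β₁ * Real.tanh β₂ ≤ (latticeN d n : ℝ)⁻¹ *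
        ∑ i : LatticeVertex d n, ∑ j : LatticeVertex d n,
          if i ≠ j then
            coordCov (latticeIsing d n β₁) i j * coordCov (latticeIsing d n β₂) i j
          else 0 := by
  have hN : (0 : ℝ) < latticeN d n := by exact_mod_cast latticeN_pos d n
  rw [le_inv_mul_iff₀ hN, ← card_vertex, ← nsmul_eq_mul]
  refine Finset.card_nsmul_le_sum _ _ _ fun i _ => ?_
  obtain ⟨j, hj⟩ := exists_nbr d n hd hn i
  have hij : i ≠ j := by
    rintro rfl
    rw [l1dist_self] at hj
    exact absurd hj (by norm_num)
  have h0 : ∀ k ∈ Finset.univ, 0 ≤ (if i ≠ k then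
            coordCov (latticeIsing d n β₁) i k * coordCov (latticeIsing d n β₂) i k
          else 0) := fun k _ => by
    split_ifs with h
    · exact mul_nonneg (hposX i k h) (hposY i k h)
    · exact le_rfl
  refine le_trans ?_ (Finset.single_le_sum h0 (Finset.mem_univ j))
  rw [if_pos hij]
  exact mul_le_mul (lattice_nbr_cov d n β₁ hβ₁ i j hj) (lattice_nbr_cov d n β₂ hβ₂ i j hj)
    (tanh_pos_of_pos hβ₂).le (hposX i j hij)

/-- a statistic close to the normalized sum of products has the same limit law -/
lemma clt_of_approx (d : ℕ) (hd : 1 ≤ d) (β₁ β₂ : ℝ) (hβ₁ : 0 < β₁) (hβ₂ : 0 < β₂)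
    (c : ℝ) (hc : 0 < c)
    (hposX : ∀ n (i j : LatticeVertex d n), i ≠ j →
      0 ≤ coordCov (latticeIsing d n β₁) i j)
    (hposY : ∀ n (i j : LatticeVertex d n), i ≠ j →
      0 ≤ coordCov (latticeIsing d n β₂) i j)
    (hdecX : ∀ n (i j : LatticeVertex d n), i ≠ j →
      coordCov (latticeIsing d n β₁) i j ≤ Real.exp (-c * (l1dist i.1 j.1 : ℝ)))
    (hdecY : ∀ n (i j : LatticeVertex d n), i ≠ j →
      coordCov (latticeIsing d n β₂) i j ≤ Real.exp (-c * (l1dist i.1 j.1 : ℝ)))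
    (κ : ℝ) (hκ0 : 0 < κ)
    (hκ : Tendsto
      (fun n => (latticeN d n : ℝ)⁻¹ *
        ∑ i : LatticeVertex d n, ∑ j : LatticeVertex d n,
          if i ≠ j then
            coordCov (latticeIsing d n β₁) i j * coordCov (latticeIsing d n β₂) i j
          else 0)
      atTop (𝓝 κ))
    (g : ∀ n, (LatticeVertex d n → ℝ) × (LatticeVertex d n → ℝ) → ℝ)
    (hg : ∀ n, Measurable (g n))
    (happ : ∀ n (s s' : LatticeVertex d n → Bool),
      |g n (pmVec s, pmVec s') - (Real.sqrt (latticeN d n))⁻¹ * ∑ i, pmVec s i * pmVec s' i|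
        ≤ 3 * Real.sqrt (latticeN d n)
          * (sampleMean (pmVec s) ^ 2 + sampleMean (pmVec s') ^ 2)) :
    _root_.TendstoInDistribution
      (fun n => Measure.map (g n) ((latticeIsing d n β₁).prod (latticeIsing d n β₂)))
      (gaussianReal 0 (Real.toNNReal (1 + κ))) := by
  obtain ⟨M, hM0, hM1, hM2⟩ := exists_sum_bound' d c hc
  have hNt : Tendsto (fun n => (latticeN d n : ℝ)) atTop atTop :=
    tendsto_atTop_mono (fun n => le_latticeN d n hd) tendsto_natCast_atTop_atTop
  haveI : ∀ n β, IsProbabilityMeasure (latticeIsing d n β) := fun n β => by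
    unfold latticeIsing; infer_instance
  haveI : ∀ n, IsProbabilityMeasure
      (Measure.map (g n) ((latticeIsing d n β₁).prod (latticeIsing d n β₂))) := fun n =>
    Measure.isProbabilityMeasure_map (hg n).aemeasurable
  refine tendsto_dist_of_charFun _ _ fun t => ?_
  rw [charFun_gaussianReal]
  -- first step: the normalized sum
  have s1 := tendsto_of_block_bound _ _ hNt t M d (fun n l hl hδ =>
    charFun_bound hβ₁ hβ₂ hc (hM1 n) (hM2 n) (hposX n) (hposY n) (hdecX n) (hdecY n) t l hl hδ)
  -- second step: convergence of the Gaussian factor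
  have s2 : Tendsto (fun n => Complex.exp (((-(t ^ 2 * (1 + (latticeN d n : ℝ)⁻¹ *
        ∑ i : LatticeVertex d n, ∑ j : LatticeVertex d n,
          if i ≠ j then
            coordCov (latticeIsing d n β₁) i j * coordCov (latticeIsing d n β₂) i j
          else 0) / 2) : ℝ)) : ℂ)) atTop
      (𝓝 (Complex.exp ((-(t ^ 2 * (1 + κ) / 2) : ℝ) : ℂ))) := by
    have hcont : Continuous (fun x : ℝ => Complex.exp ((-(t ^ 2 * (1 + x) / 2) : ℝ) : ℂ)) := by
      fun_prop
    exact (hcont.tendsto κ).comp hκ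
  -- third step: replacing the statistic
  have s3 : Tendsto (fun n => charFun (Measure.map (g n)
        ((latticeIsing d n β₁).prod (latticeIsing d n β₂))) t
      - exC (jp (ip β₁ (latticeQ d n)) (ip β₂ (latticeQ d n))) (fun st =>
        Complex.exp (Complex.I * ((t * ((Real.sqrt (latticeN d n))⁻¹ * ∑ i, Wf i st) : ℝ) : ℂ))))
      atTop (𝓝 0) := by
    have hz : Tendsto (fun n => |t| * 6 * M * (Real.sqrt (latticeN d n))⁻¹) atTop (𝓝 0) := by
      have : Tendsto (fun n => (Real.sqrt (latticeN d n))⁻¹) atTop (𝓝 0) :=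
        tendsto_inv_atTop_zero.comp (Real.tendsto_sqrt_atTop.comp hNt)
      simpa using this.const_mul (|t| * 6 * M)
    refine squeeze_zero_norm (fun n => ?_) hz
    have hp := ip_fkg β₁ hβ₁.le _ (latticeQ_nonneg d n)
    have hq := ip_fkg β₂ hβ₂.le _ (latticeQ_nonneg d n)
    have hN : (0 : ℝ) < latticeN d n := by exact_mod_cast latticeN_pos d n
    unfold latticeIsing
    rw [charFun_joint _ _ _ _ (hg n)]
    refine (exC_diff (jp_fkg hp hq).nonneg (fun st => g n (pmVec st.1, pmVec st.2))
      (fun st => (Real.sqrt (latticeN d n))⁻¹ * ∑ i, Wf i st)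
      (fun st => 3 * Real.sqrt (latticeN d n)
          * (sampleMean (pmVec st.1) ^ 2 + sampleMean (pmVec st.2) ^ 2)) t
      (fun st => happ n st.1 st.2)).trans ?_
    rw [exR_mul, exR_add, exR_jp_fst _ _ hq.sum_one (fun s => sampleMean (pmVec s) ^ 2),
      exR_jp_snd _ _ hp.sum_one (fun s => sampleMean (pmVec s) ^ 2)]
    have b1 := mean_sq_bound hβ₁ (hM1 n) (hposX n) (hdecX n)
    have b2 := mean_sq_bound hβ₂ (hM1 n) (hposY n) (hdecY n)
    have hr0 : 0 < Real.sqrt (latticeN d n) := Real.sqrt_pos.2 hN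
    have hrr : Real.sqrt (latticeN d n) * (M / latticeN d n)
        = M * (Real.sqrt (latticeN d n))⁻¹ := by
      have := Real.mul_self_sqrt hN.le
      field_simp
      linear_combination M * this
    calc _ ≤ |t| * (3 * Real.sqrt (latticeN d n) * (M / latticeN d n + M / latticeN d n)) := by
          gcongr
      _ = |t| * 6 * (Real.sqrt (latticeN d n) * (M / latticeN d n)) := by ring
      _ = _ := by rw [hrr]; ring
      _ ≤ _ := le_rfl
  have s4 := (s3.add s1).add s2
  have elim : (0 : ℂ) + 0 + Complex.exp ((-(t ^ 2 * (1 + κ) / 2) : ℝ) : ℂ)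
      = Complex.exp ((t : ℂ) * ((0 : ℝ) : ℂ) * Complex.I
        - ((Real.toNNReal (1 + κ) : ℝ) : ℂ) * (t : ℂ) ^ 2 / 2) := by
    rw [Real.coe_toNNReal _ (by linarith)]
    push_cast
    rw [add_zero, zero_add]
    congr 1
    ring
  rw [elim] at s4
  refine s4.congr fun n => ?_
  ring

end Conclusion

/-- **Theorem 1 (nonsense correlation on lattices).** Let `X ~ P_{β₁,Q(Λ_{n,d})}` and
`Y ~ P_{β₂,Q(Λ_{n,d})}` be independent, with nonnegative pairwise covariances decaying
exponentially (rate `c > 0`), sample means tending to `0` in probability, and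
`(1/Nₙ) Σ_{i≠j} Cov(Xᵢ,Xⱼ)Cov(Yᵢ,Yⱼ) → κ`. Then `κ > 0`, `√Nₙ · Tₙ →d N(0, 1+κ)` with
`1 + κ > 1`, and `√Nₙ · ρₙ →d N(0, 1+κ)`. -/
theorem lattice_nonsense_correlation
    (d : ℕ) (hd : 1 ≤ d) (β₁ β₂ : ℝ) (hβ₁ : 0 < β₁) (hβ₂ : 0 < β₂)
    (c : ℝ) (hc : 0 < c)
    (hposX : ∀ n (i j : LatticeVertex d n), i ≠ j →
      0 ≤ coordCov (latticeIsing d n β₁) i j)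
    (hposY : ∀ n (i j : LatticeVertex d n), i ≠ j →
      0 ≤ coordCov (latticeIsing d n β₂) i j)
    (hdecX : ∀ n (i j : LatticeVertex d n), i ≠ j →
      coordCov (latticeIsing d n β₁) i j ≤ Real.exp (-c * (l1dist i.1 j.1 : ℝ)))
    (hdecY : ∀ n (i j : LatticeVertex d n), i ≠ j →
      coordCov (latticeIsing d n β₂) i j ≤ Real.exp (-c * (l1dist i.1 j.1 : ℝ)))
    (hmeanX : TendstoInProbability
      (fun n => Measure.map (sampleMean (ι := LatticeVertex d n)) (latticeIsing d n β₁)) 0)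
    (hmeanY : TendstoInProbability
      (fun n => Measure.map (sampleMean (ι := LatticeVertex d n)) (latticeIsing d n β₂)) 0)
    (κ : ℝ)
    (hκ : Tendsto
      (fun n => (latticeN d n : ℝ)⁻¹ *
        ∑ i : LatticeVertex d n, ∑ j : LatticeVertex d n,
          if i ≠ j then
            coordCov (latticeIsing d n β₁) i j * coordCov (latticeIsing d n β₂) i j
          else 0)
      atTop (𝓝 κ)) :
    0 < κ ∧ 1 < 1 + κ ∧
    TendstoInDistribution
      (fun n => Measure.map
        (fun p : (LatticeVertex d n → ℝ) × (LatticeVertex d n → ℝ) =>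
          Real.sqrt (latticeN d n) * sampleCov p.1 p.2)
        ((latticeIsing d n β₁).prod (latticeIsing d n β₂)))
      (gaussianReal 0 (Real.toNNReal (1 + κ))) ∧
    TendstoInDistribution
      (fun n => Measure.map
        (fun p : (LatticeVertex d n → ℝ) × (LatticeVertex d n → ℝ) =>
          Real.sqrt (latticeN d n) * sampleCorr p.1 p.2)
        ((latticeIsing d n β₁).prod (latticeIsing d n β₂)))
      (gaussianReal 0 (Real.toNNReal (1 + κ))) := by
  have hκ0 : 0 < κ := by
    refine lt_of_lt_of_le (mul_pos (tanh_pos_of_pos hβ₁) (tanh_pos_of_pos hβ₂))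
      (ge_of_tendsto hκ ?_)
    filter_upwards [eventually_ge_atTop 1] with n hn
    exact kappa_lower d n hd hn β₁ β₂ hβ₁ hβ₂ (hposX n) (hposY n)
  refine ⟨hκ0, by linarith, ?_, ?_⟩
  · refine clt_of_approx d hd β₁ β₂ hβ₁ hβ₂ c hc hposX hposY hdecX hdecY κ hκ0 hκ _
      (fun n => measurable_sampleCov.const_mul _) fun n s s' => ?_
    have h := cov_approx (pmVec s) (pmVec s')
    rw [card_vertex] at h
    refine h.trans ?_
    gcongr
    norm_num
  · refine clt_of_approx d hd β₁ β₂ hβ₁ hβ₂ c hc hposX hposY hdecX hdecY κ hκ0 hκ _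
      (fun n => measurable_sampleCorr.const_mul _) fun n s s' => ?_
    have h := corr_approx (pmVec s) (pmVec s') (fun i => pm_sq s i) (fun i => pm_sq s' i)
    rw [card_vertex] at h
    exact h

end
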